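/- Let F ⊂ Sym²(ℝⁿ) be a Dirichlet set with Dirichlet dual F̃, and let F⃗ and F̃⃗ denote the ray sets of F and F̃ respectively. Let Ω ⊂ ℝⁿ be a bounded open set with smooth boundary which is both strictly F⃗-convex and strictly F̃⃗-convex at each boundary point. Then for every continuous function φ : ∂Ω → ℝ there exists a unique continuous function u : cl(Ω) → ℝ such that u = φ on ∂Ω, the restriction of u to Ω is of type F, and the restriction of −u to Ω is of type F̃. -/

import Mathlib

open Set Metric Filter MeasureTheory Asymptotics
open scoped Topology BigOperators RealInnerProductSpace

noncomputable section

abbrev Euc (n : ℕ) : Type := EuclideanSpace ℝ (Fin n)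

abbrev SymMat (n : ℕ) : Type := ↥(selfAdjoint (Matrix (Fin n) (Fin n) ℝ))

/-- `u` is subaffine on `X`. -/
def SubaffineOn {n : ℕ} (X : Set (Euc n)) (u : Euc n → EReal) : Prop :=
  ∀ K : Set (Euc n), IsCompact K → K ⊆ X →
    ∀ a : Euc n →ᵃ[ℝ] ℝ,
      (∀ x ∈ frontier K, u x ≤ (a x : EReal)) → ∀ x ∈ K, u x ≤ (a x : EReal)

/-- The Hessian matrix of `u` at `x`. -/
def hessMat {n : ℕ} (u : Euc n → ℝ) (x : Euc n) : Matrix (Fin n) (Fin n) ℝ :=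
  fun i j => iteratedFDeriv ℝ 2 u x ![EuclideanSpace.single i 1, EuclideanSpace.single j 1]

structure IsDirichletSet {n : ℕ} (F : Set (SymMat n)) : Prop where
  nonempty : F.Nonempty
  ne_univ : F ≠ Set.univ
  isClosed : IsClosed F
  add_psd : ∀ A ∈ F, ∀ P : SymMat n, (P : Matrix (Fin n) (Fin n) ℝ).PosSemidef → A + P ∈ F

/-- The Dirichlet dual `F̃ = −(∼ Int F)`. -/
def dirDual {n : ℕ} (F : Set (SymMat n)) : Set (SymMat n) := {A | -A ∉ interior F}

/-- A C² function `v` on `X` is of type `F`. -/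
def IsTypeFC2 {n : ℕ} (F : Set (SymMat n)) (X : Set (Euc n)) (v : Euc n → ℝ) : Prop :=
  ContDiffOn ℝ 2 v X ∧ ∀ x ∈ X, ∃ A ∈ F, (A : Matrix (Fin n) (Fin n) ℝ) = hessMat v x

/-- An u.s.c. function `u` is of type `F` on `X`. -/
def IsTypeF {n : ℕ} (F : Set (SymMat n)) (X : Set (Euc n)) (u : Euc n → EReal) : Prop :=
  ∀ v : Euc n → ℝ, IsTypeFC2 (dirDual F) X v → SubaffineOn X (fun x => u x + (v x : EReal))

/-- The ray set `F⃗` of `F`. -/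
def raySet {n : ℕ} (F : Set (SymMat n)) : Set (SymMat n) :=
  closure {A : SymMat n | ∃ t₀ : ℝ, ∀ t : ℝ, t₀ ≤ t → t • A ∈ F}

/-- The bilinear form `⟨A v, w⟩` of a matrix. -/
def bilin {n : ℕ} (A : Matrix (Fin n) (Fin n) ℝ) (v w : Euc n) : ℝ :=
  ∑ i, ∑ j, A i j * v i * w j

/-- `A` is not negative definite. -/
def NotNegDef {n : ℕ} (A : SymMat n) : Prop :=
  ¬ (-(A : Matrix (Fin n) (Fin n) ℝ)).PosDef

def IsLocalDefiningFn {n : ℕ} (Ω U : Set (Euc n)) (ρ : Euc n → ℝ) : Prop :=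
  IsOpen U ∧ ContDiffOn ℝ (⊤ : ℕ∞) ρ U ∧ Ω ∩ U = {y ∈ U | ρ y < 0} ∧ ∀ y ∈ U, fderiv ℝ ρ y ≠ 0

def HasSmoothBoundary {n : ℕ} (Ω : Set (Euc n)) : Prop :=
  ∀ x ∈ frontier Ω, ∃ U ρ, x ∈ U ∧ IsLocalDefiningFn Ω U ρ

/-- `∂Ω` is strictly `G`-convex at `x`. -/
def StrictlyConvexAt {n : ℕ} (G : Set (SymMat n)) (Ω : Set (Euc n)) (x : Euc n) : Prop :=
  ∃ U ρ, x ∈ U ∧ IsLocalDefiningFn Ω U ρ ∧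
    ∃ B ∈ interior G, ∀ v w : Euc n, fderiv ℝ ρ x v = 0 → fderiv ℝ ρ x w = 0 →
      bilin (hessMat ρ x) v w = bilin (B : Matrix (Fin n) (Fin n) ℝ) v w

def symOne (n : ℕ) : SymMat n := ⟨1, selfAdjoint.mem_iff.mpr (IsSelfAdjoint.one _)⟩

/-- `u` is twice differentiable at `x` with Hessian `A`. -/
def TwiceDiffWithHessAt {n : ℕ} (u : Euc n → ℝ) (x : Euc n)
    (A : Matrix (Fin n) (Fin n) ℝ) : Prop :=
  ∃ p : Euc n, (fun h : Euc n => u (x + h) - u x - ⟪p, h⟫ - 1/2 * bilin A h h)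
      =o[𝓝 (0 : Euc n)] fun h => ‖h‖ ^ 2

/-- bilinear form as continuous bilinear map -/
def bl {n : ℕ} (A : Matrix (Fin n) (Fin n) ℝ) : Euc n →L[ℝ] Euc n →L[ℝ] ℝ :=
  ∑ i, ∑ j, A i j • ((EuclideanSpace.proj (𝕜 := ℝ) i : Euc n →L[ℝ] ℝ).smulRight
    (EuclideanSpace.proj (𝕜 := ℝ) j : Euc n →L[ℝ] ℝ))

theorem bl_apply {n : ℕ} (A : Matrix (Fin n) (Fin n) ℝ) (v w : Euc n) :
    bl A v w = bilin A v w := by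
  simp [bl, bilin, mul_assoc]

theorem bilin_add_mat {n : ℕ} (A B : Matrix (Fin n) (Fin n) ℝ) (v w : Euc n) :
    bilin (A + B) v w = bilin A v w + bilin B v w := by
  simp [bilin, add_mul, Finset.sum_add_distrib]

theorem bilin_neg_mat {n : ℕ} (A : Matrix (Fin n) (Fin n) ℝ) (v w : Euc n) :
    bilin (-A) v w = - bilin A v w := by
  simp [bilin]

theorem bilin_sub_mat {n : ℕ} (A B : Matrix (Fin n) (Fin n) ℝ) (v w : Euc n) :
    bilin (A - B) v w = bilin A v w - bilin B v w := by
  rw [sub_eq_add_neg, bilin_add_mat, bilin_neg_mat, sub_eq_add_neg]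

theorem bilin_smul_mat {n : ℕ} (t : ℝ) (A : Matrix (Fin n) (Fin n) ℝ) (v w : Euc n) :
    bilin (t • A) v w = t * bilin A v w := by
  simp [bilin, Finset.mul_sum, mul_assoc]

theorem bilin_one {n : ℕ} (v : Euc n) :
    bilin (1 : Matrix (Fin n) (Fin n) ℝ) v v = ‖v‖ ^ 2 := by
  rw [EuclideanSpace.real_norm_sq_eq]
  simp [bilin, Matrix.one_apply, ite_mul, pow_two]

theorem bilin_smul_vec {n : ℕ} (A : Matrix (Fin n) (Fin n) ℝ) (t : ℝ) (v : Euc n) :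
    bilin A (t • v) (t • v) = t ^ 2 * bilin A v v := by
  simp only [← bl_apply, map_smul, smul_apply, smul_eq_mul]; ring

theorem bilin_neg_vec {n : ℕ} (A : Matrix (Fin n) (Fin n) ℝ) (v : Euc n) :
    bilin A (-v) (-v) = bilin A v v := by
  simp only [← bl_apply, map_neg, neg_apply, neg_neg]

theorem sym_entry {n : ℕ} (A : SymMat n) (i j : Fin n) :
    (A : Matrix (Fin n) (Fin n) ℝ) i j = (A : Matrix (Fin n) (Fin n) ℝ) j i := by
  have h := A.2
  rw [selfAdjoint.mem_iff, Matrix.star_eq_conjTranspose] at h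
  have := congrFun (congrFun h i) j
  simpa [Matrix.conjTranspose_apply] using this.symm

theorem bilin_comm {n : ℕ} (A : SymMat n) (v w : Euc n) :
    bilin (A : Matrix (Fin n) (Fin n) ℝ) v w = bilin (A : Matrix (Fin n) (Fin n) ℝ) w v := by
  unfold bilin
  rw [Finset.sum_comm]
  refine Finset.sum_congr rfl fun i _ => Finset.sum_congr rfl fun j _ => ?_
  rw [sym_entry A j i]; ring

theorem bilin_expand {n : ℕ} (A : SymMat n) (v w : Euc n) :
    bilin (A : Matrix (Fin n) (Fin n) ℝ) (v + w) (v + w) =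
      bilin (A : Matrix (Fin n) (Fin n) ℝ) v v + 2 * bilin (A : Matrix (Fin n) (Fin n) ℝ) v w
        + bilin (A : Matrix (Fin n) (Fin n) ℝ) w w := by
  have := bilin_comm A v w
  simp only [← bl_apply, map_add, add_apply] at *
  linarith

theorem psd_iff {n : ℕ} (P : SymMat n) :
    (P : Matrix (Fin n) (Fin n) ℝ).PosSemidef ↔
      ∀ h : Euc n, 0 ≤ bilin (P : Matrix (Fin n) (Fin n) ℝ) h h := by
  have key : ∀ h : Fin n → ℝ, star h ⬝ᵥ ((P : Matrix (Fin n) (Fin n) ℝ).mulVec h) =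
      bilin (P : Matrix (Fin n) (Fin n) ℝ) (WithLp.toLp 2 h) (WithLp.toLp 2 h) := by
    intro h
    simp only [bilin, dotProduct, Matrix.mulVec, Finset.mul_sum]
    refine Finset.sum_congr rfl fun i _ => Finset.sum_congr rfl fun j _ => ?_
    simp; ring
  rw [Matrix.posSemidef_iff_dotProduct_mulVec]
  constructor
  · rintro ⟨_, h2⟩ h
    have := h2 (WithLp.ofLp h)
    rwa [key] at this
  · intro h
    refine ⟨P.2, fun x => ?_⟩
    rw [key]; exact h _

theorem coe_symOne {n : ℕ} : ((symOne n : SymMat n) : Matrix (Fin n) (Fin n) ℝ) = 1 := rfl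

theorem bilin_smul_one {n : ℕ} (A : SymMat n) (t : ℝ) (h : Euc n) :
    bilin ((A + t • symOne n : SymMat n) : Matrix (Fin n) (Fin n) ℝ) h h
      = bilin (A : Matrix (Fin n) (Fin n) ℝ) h h + t * ‖h‖ ^ 2 := by
  have : ((A + t • symOne n : SymMat n) : Matrix (Fin n) (Fin n) ℝ)
    = (A : Matrix (Fin n) (Fin n) ℝ) + t • (1 : Matrix (Fin n) (Fin n) ℝ) := rfl
  rw [this, bilin_add_mat, bilin_smul_mat, bilin_one]

theorem ev_bilin {n : ℕ} (Y : SymMat n) {ε : ℝ} (hε : 0 < ε) :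
    ∀ᶠ X : SymMat n in 𝓝 Y, ∀ h : Euc n, |bilin (X : Matrix (Fin n) (Fin n) ℝ) h h
      - bilin (Y : Matrix (Fin n) (Fin n) ℝ) h h| ≤ ε * ‖h‖ ^ 2 := by
  have hc : Continuous fun X : SymMat n => ∑ i, ∑ j, |(X : Matrix (Fin n) (Fin n) ℝ) i j
      - (Y : Matrix (Fin n) (Fin n) ℝ) i j| := by
    refine continuous_finsetSum _ fun i _ => continuous_finsetSum _ fun j _ => ?_
    exact ((continuous_subtype_val.matrix_elem i j).sub continuous_const).abs
  have h0 := hc.tendsto Y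
  simp only [sub_self, abs_zero, Finset.sum_const_zero] at h0
  filter_upwards [h0.eventually (gt_mem_nhds hε)] with X hX h
  rw [← bilin_sub_mat]
  unfold bilin
  refine (Finset.abs_sum_le_sum_abs _ _).trans ?_
  refine le_trans ?_ (mul_le_mul_of_nonneg_right hX.le (by positivity))
  rw [Finset.sum_mul]
  refine Finset.sum_le_sum fun i _ => (Finset.abs_sum_le_sum_abs _ _).trans ?_
  rw [Finset.sum_mul]
  refine Finset.sum_le_sum fun j _ => ?_
  rw [abs_mul, abs_mul, mul_assoc, pow_two, Matrix.sub_apply]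
  have h1 : |h i| ≤ ‖h‖ := PiLp.norm_apply_le h i
  have h2 : |h j| ≤ ‖h‖ := PiLp.norm_apply_le h j
  gcongr

theorem mono_mem {n : ℕ} {F : Set (SymMat n)}
    (hF : ∀ A ∈ F, ∀ P : SymMat n, (P : Matrix (Fin n) (Fin n) ℝ).PosSemidef → A + P ∈ F)
    {A B : SymMat n} (hA : A ∈ F)
    (h : ∀ h : Euc n, bilin (A : Matrix (Fin n) (Fin n) ℝ) h h
      ≤ bilin (B : Matrix (Fin n) (Fin n) ℝ) h h) : B ∈ F := by
  have := hF A hA (B - A) ((psd_iff _).2 fun v => by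
    have := h v
    have e : ((B - A : SymMat n) : Matrix (Fin n) (Fin n) ℝ)
      = (B : Matrix (Fin n) (Fin n) ℝ) - (A : Matrix (Fin n) (Fin n) ℝ) := rfl
    rw [e, bilin_sub_mat]; linarith)
  simpa using this

theorem tendsto_add_smul_one {n : ℕ} (A : SymMat n) :
    Tendsto (fun t : ℝ => A + t • symOne n) (𝓝 0) (𝓝 A) := by
  have : Continuous (fun t : ℝ => A + t • symOne n) := by
    refine continuous_const.add (Continuous.subtype_mk ?_ _)
    exact continuous_id.smul continuous_const
  have := this.tendsto 0
  simpa using this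

theorem mem_interior_iff' {n : ℕ} {F : Set (SymMat n)}
    (hF : ∀ A ∈ F, ∀ P : SymMat n, (P : Matrix (Fin n) (Fin n) ℝ).PosSemidef → A + P ∈ F)
    (A : SymMat n) : A ∈ interior F ↔ ∃ δ : ℝ, 0 < δ ∧ A + (-δ) • symOne n ∈ F := by
  constructor
  · intro h
    have h1 := tendsto_add_smul_one A (mem_interior_iff_mem_nhds.1 h)
    have h2 : Tendsto (fun δ : ℝ => -δ) (𝓝[>] 0) (𝓝 0) := by
      have : Tendsto (fun δ : ℝ => -δ) (𝓝 0) (𝓝 0) := by simpa using (continuous_neg.tendsto (0:ℝ))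
      exact this.mono_left nhdsWithin_le_nhds
    obtain ⟨δ, hδ, h4⟩ := ((h2.eventually h1).and self_mem_nhdsWithin).exists
    exact ⟨δ, h4, hδ⟩
  · rintro ⟨δ, hδ, h⟩
    rw [mem_interior_iff_mem_nhds]
    filter_upwards [ev_bilin A hδ] with X hX
    refine mono_mem hF h fun v => ?_
    rw [bilin_smul_one]
    have := (abs_le.1 (hX v)).1
    linarith

theorem mem_of_forall_add {n : ℕ} {F : Set (SymMat n)} (hF : IsClosed F) (A : SymMat n)
    (h : ∀ ε : ℝ, 0 < ε → A + ε • symOne n ∈ F) : A ∈ F := by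
  have h2 : Tendsto (fun t : ℝ => A + t • symOne n) (𝓝[>] 0) (𝓝 A) :=
    (tendsto_add_smul_one A).mono_left nhdsWithin_le_nhds
  refine hF.mem_of_tendsto h2 ?_
  filter_upwards [self_mem_nhdsWithin] with t ht using h t ht

theorem dirDual_dirichlet {n : ℕ} {F : Set (SymMat n)} (hF : IsDirichletSet F) :
    IsDirichletSet (dirDual F) where
  nonempty := by
    obtain ⟨A, hA⟩ := (Set.ne_univ_iff_exists_notMem F).1 hF.ne_univ
    exact ⟨-A, by simp only [dirDual, mem_ofPred_eq, neg_neg]; exact fun h => hA (interior_subset h)⟩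
  ne_univ := by
    obtain ⟨A, hA⟩ := hF.nonempty
    rw [Set.ne_univ_iff_exists_notMem]
    refine ⟨-(A + (1:ℝ) • symOne n), ?_⟩
    simp only [dirDual, mem_ofPred_eq, neg_neg, not_not]
    rw [mem_interior_iff' hF.add_psd]
    exact ⟨1, one_pos, by simpa [add_assoc] using hA⟩
  isClosed := by
    have : dirDual F = (fun A : SymMat n => -A) ⁻¹' (interior F)ᶜ := rfl
    rw [this]
    exact (isOpen_interior.isClosed_compl).preimage continuous_neg
  add_psd := by
    intro A hA P hP h
    apply hA
    rw [mem_interior_iff' hF.add_psd] at h ⊢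
    obtain ⟨δ, hδ, h⟩ := h
    refine ⟨δ, hδ, ?_⟩
    have := hF.add_psd _ h P hP
    convert this using 1
    abel

theorem ray_lemma {n : ℕ} {F : Set (SymMat n)} {B : SymMat n}
    (hB : B ∈ interior (raySet F)) :
    ∃ A : SymMat n, ∃ δ > 0, ∃ t₀ : ℝ, (∀ t, t₀ ≤ t → t • A ∈ F) ∧
      ∀ h : Euc n, bilin (A : Matrix (Fin n) (Fin n) ℝ) h h + δ * ‖h‖ ^ 2
        ≤ bilin (B : Matrix (Fin n) (Fin n) ℝ) h h := by
  have h1 := tendsto_add_smul_one B (mem_interior_iff_mem_nhds.1 hB)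
  have h2 : Tendsto (fun δ : ℝ => -δ) (𝓝[>] 0) (𝓝 0) := by
    have : Tendsto (fun δ : ℝ => -δ) (𝓝 0) (𝓝 0) := by simpa using (continuous_neg.tendsto (0:ℝ))
    exact this.mono_left nhdsWithin_le_nhds
  obtain ⟨δ, hδ, h4⟩ := ((h2.eventually h1).and self_mem_nhdsWithin).exists
  have hpos : (0:ℝ) < δ := h4
  obtain ⟨A, hA, t₀, ht⟩ := (mem_closure_iff_frequently.1 hδ).and_eventually
    (ev_bilin (B + (-δ) • symOne n) (half_pos hpos)) |>.exists.imp
      fun A h => (⟨h.2, h.1⟩ : _ ∧ _)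
  refine ⟨A, δ / 2, half_pos hpos, t₀, ht, fun v => ?_⟩
  have := (abs_le.1 (hA v)).2
  rw [bilin_smul_one] at this
  linarith

/-- viscosity subsolutions -/
def Visc {n : ℕ} (F : Set (SymMat n)) (X : Set (Euc n)) (u : Euc n → ℝ) : Prop :=
  ∀ x ∈ X, ∀ A : SymMat n, ∀ L : Euc n →L[ℝ] ℝ,
    (∀ᶠ h in 𝓝 (0 : Euc n), u (x + h) ≤ u x + L h
      + 1 / 2 * bilin (A : Matrix (Fin n) (Fin n) ℝ) h h) → A ∈ F

theorem tendsto_add_zero {n : ℕ} (x : Euc n) : Tendsto (fun h : Euc n => x + h) (𝓝 0) (𝓝 x) := by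
  have := (continuous_const_add x).tendsto (0 : Euc n)
  simpa using this

theorem taylor2 {n : ℕ} {f : Euc n → ℝ} {x : Euc n} (hf : ContDiffAt ℝ 2 f x) {θ : ℝ}
    (hθ : 0 < θ) : ∀ᶠ h in 𝓝 (0 : Euc n),
      |f (x + h) - f x - fderiv ℝ f x h - 1 / 2 * fderiv ℝ (fderiv ℝ f) x h h| ≤ θ * ‖h‖ ^ 2 := by
  have h1 : ∀ᶠ y in 𝓝 x, DifferentiableAt ℝ f y := by
    filter_upwards [hf.eventually (by simp)] with y hy using hy.differentiableAt (by simp)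
  have h2 : DifferentiableAt ℝ (fderiv ℝ f) x :=
    (hf.fderiv_right (m := 1) (by norm_num)).differentiableAt (by simp)
  have h3 := h2.hasFDerivAt
  set D := fderiv ℝ (fderiv ℝ f) x with hD
  rw [hasFDerivAt_iff_isLittleO_nhds_zero] at h3
  have h4 := h3.def hθ
  have h5 := ((tendsto_add_zero x).eventually h1).and h4
  obtain ⟨r, hr, h6⟩ := Metric.eventually_nhds_iff_ball.1 h5
  filter_upwards [Metric.ball_mem_nhds (0 : Euc n) hr] with h hh
  have hh' : ‖h‖ < r := by simpa using hh
  let g : ℝ → ℝ := fun t => f (x + t • h) - t * fderiv ℝ f x h - t ^ 2 / 2 * D h h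
  let g' : ℝ → ℝ := fun t => fderiv ℝ f (x + t • h) h - fderiv ℝ f x h - t * D h h
  have hmem : ∀ t ∈ Icc (0:ℝ) 1, t • h ∈ ball (0 : Euc n) r := by
    intro t ht
    rw [mem_ball_zero_iff, norm_smul, Real.norm_eq_abs, abs_of_nonneg ht.1]
    have := norm_nonneg h
    nlinarith [ht.2]
  have hd : ∀ t ∈ Icc (0:ℝ) 1, HasDerivWithinAt g (g' t) (Icc 0 1) t := by
    intro t ht
    have a1 : HasFDerivAt f (fderiv ℝ f (x + t • h)) (x + t • h) := (h6 _ (hmem t ht)).1.hasFDerivAt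
    have a2 : HasDerivAt (fun t : ℝ => x + t • h) h t := by
      simpa using ((hasDerivAt_id t).smul_const h).const_add x
    have a3 := a1.comp_hasDerivAt t a2
    have a4 : HasDerivAt (fun t : ℝ => t * fderiv ℝ f x h) (fderiv ℝ f x h) t := by
      simpa using (hasDerivAt_id t).mul_const (fderiv ℝ f x h)
    have a5 : HasDerivAt (fun t : ℝ => t ^ 2 / 2 * D h h) (t * D h h) t := by
      have := (((hasDerivAt_pow 2 t).div_const 2).mul_const (D h h))
      exact this.congr_deriv (by simp)
    exact ((a3.sub a4).sub a5).hasDerivWithinAt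
  have hb : ∀ t ∈ Ico (0:ℝ) 1, ‖g' t‖ ≤ θ * ‖h‖ ^ 2 := by
    intro t ht
    have ht' : t ∈ Icc (0:ℝ) 1 := ⟨ht.1, ht.2.le⟩
    have b1 := (h6 _ (hmem t ht')).2
    have b2 := (fderiv ℝ f (x + t • h) - fderiv ℝ f x - D (t • h)).le_opNorm h
    have b3 : (fderiv ℝ f (x + t • h) - fderiv ℝ f x - D (t • h)) h = g' t := by
      simp [g']
    rw [b3] at b2
    refine b2.trans ?_
    rw [norm_smul, Real.norm_eq_abs, abs_of_nonneg ht.1] at b1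
    have := norm_nonneg h
    calc _ ≤ (θ * (t * ‖h‖)) * ‖h‖ := by gcongr
      _ = t * (θ * ‖h‖ ^ 2) := by ring
      _ ≤ 1 * (θ * ‖h‖ ^ 2) := by gcongr; exact ht.2.le
      _ = _ := one_mul _
  have := norm_image_sub_le_of_norm_deriv_le_segment' hd hb 1 (by simp)
  simp only [g] at this
  simp only [Real.norm_eq_abs] at this
  convert this using 1
  · congr 1; simp; ring
  · ring

theorem bilin_hess {n : ℕ} (f : Euc n → ℝ) (x v w : Euc n) :
    bilin (hessMat f x) v w = fderiv ℝ (fderiv ℝ f) x v w := by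
  have e : ∀ v : Euc n, v = ∑ i, v i • (EuclideanSpace.single i (1:ℝ) : Euc n) := by
    intro v
    ext j
    simp [Finset.sum_apply, Pi.single_apply]
  conv_rhs => rw [e v, e w]
  simp only [map_sum, map_smul, sum_apply, smul_apply, smul_eq_mul]
  unfold bilin hessMat
  simp only [iteratedFDeriv_two_apply]
  simp only [Matrix.cons_val_zero, Matrix.cons_val_one]
  simp only [Finset.mul_sum]
  rw [Finset.sum_comm]
  refine Finset.sum_congr rfl fun i _ => Finset.sum_congr rfl fun j _ => ?_
  ring

theorem ev_scale {n : ℕ} {P : Euc n → Prop} (hP : ∀ᶠ h in 𝓝 (0 : Euc n), P h) (h : Euc n) :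
    ∃ s : ℝ, 0 < s ∧ P (s • h) ∧ P (-(s • h)) := by
  have t1 : Tendsto (fun s : ℝ => s • h) (𝓝[>] 0) (𝓝 0) := by
    have : Continuous fun s : ℝ => s • h := by fun_prop
    have := this.tendsto 0
    rw [zero_smul] at this
    exact this.mono_left nhdsWithin_le_nhds
  have t2 : Tendsto (fun s : ℝ => -(s • h)) (𝓝[>] 0) (𝓝 0) := by
    simpa using t1.neg
  obtain ⟨s, hs⟩ := ((t1.eventually hP).and ((t2.eventually hP).and self_mem_nhdsWithin)).exists
  exact ⟨s, hs.2.2, hs.1, hs.2.1⟩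

/-- comparison of quadratic parts -/
theorem quad_cmp {n : ℕ} {A B : SymMat n} {L : Euc n →L[ℝ] ℝ}
    (h : ∀ θ : ℝ, 0 < θ → ∀ᶠ h in 𝓝 (0 : Euc n),
      bilin (A : Matrix (Fin n) (Fin n) ℝ) h h ≤
        L h + bilin (B : Matrix (Fin n) (Fin n) ℝ) h h + θ * ‖h‖ ^ 2) (v : Euc n) :
    bilin (A : Matrix (Fin n) (Fin n) ℝ) v v ≤ bilin (B : Matrix (Fin n) (Fin n) ℝ) v v := by
  have key : ∀ θ : ℝ, 0 < θ → bilin (A : Matrix (Fin n) (Fin n) ℝ) v v ≤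
      bilin (B : Matrix (Fin n) (Fin n) ℝ) v v + θ * ‖v‖ ^ 2 := by
    intro θ hθ
    obtain ⟨s, hs, h1, h2⟩ := ev_scale (h θ hθ) v
    rw [bilin_neg_vec, bilin_neg_vec, norm_neg, map_neg] at h2
    have h3 : bilin (A : Matrix (Fin n) (Fin n) ℝ) (s • v) (s • v) ≤
      bilin (B : Matrix (Fin n) (Fin n) ℝ) (s • v) (s • v) + θ * ‖s • v‖ ^ 2 := by linarith
    rw [bilin_smul_vec, bilin_smul_vec, norm_smul, mul_pow, Real.norm_eq_abs, sq_abs] at h3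
    have : 0 < s ^ 2 := by positivity
    refine le_of_mul_le_mul_left ?_ this
    linarith
  refine le_of_forall_pos_le_add fun ε hε => ?_
  have h1 := key (ε / (‖v‖ ^ 2 + 1)) (by positivity)
  have h2 : ε / (‖v‖ ^ 2 + 1) * ‖v‖ ^ 2 ≤ ε := by
    rw [div_mul_eq_mul_div, div_le_iff₀ (by positivity)]
    nlinarith
  linarith

theorem visc_of_lower {n : ℕ} {F : Set (SymMat n)} (hF : IsDirichletSet F) {X : Set (Euc n)}
    {f : Euc n → ℝ}
    (h : ∀ x ∈ X, ∃ L : Euc n →L[ℝ] ℝ, ∃ A ∈ F, ∀ θ : ℝ, 0 < θ → ∀ᶠ h in 𝓝 (0 : Euc n),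
      f x + L h + 1 / 2 * bilin (A : Matrix (Fin n) (Fin n) ℝ) h h - θ * ‖h‖ ^ 2 ≤ f (x + h)) :
    Visc F X f := by
  intro x hx B M hM
  obtain ⟨L, A, hA, hl⟩ := h x hx
  refine mono_mem hF.add_psd hA (quad_cmp (L := (2:ℝ) • (M - L)) ?_)
  intro θ hθ
  filter_upwards [hM, hl (θ / 2) (half_pos hθ)] with h h1 h2
  simp only [smul_apply, sub_apply, smul_eq_mul]
  linarith

theorem quad_add {n : ℕ} (A : SymMat n) (c : ℝ) (x h : Euc n) :
    c * bilin (A : Matrix (Fin n) (Fin n) ℝ) (x + h) (x + h) =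
      c * bilin (A : Matrix (Fin n) (Fin n) ℝ) x x
        + ((2 * c) • bl (A : Matrix (Fin n) (Fin n) ℝ) x) h
        + c * bilin (A : Matrix (Fin n) (Fin n) ℝ) h h := by
  rw [bilin_expand]
  simp only [smul_apply, smul_eq_mul, bl_apply]
  ring

theorem visc_quad {n : ℕ} {F : Set (SymMat n)} (hF : IsDirichletSet F) (X : Set (Euc n))
    {A : SymMat n} (hA : A ∈ F) (c : ℝ) :
    Visc F X (fun y => 1 / 2 * bilin (A : Matrix (Fin n) (Fin n) ℝ) y y + c) := by
  refine visc_of_lower hF fun x _ => ⟨(2 * (1 / 2 : ℝ)) • bl (A : Matrix (Fin n) (Fin n) ℝ) x, A, hA, ?_⟩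
  intro θ hθ
  refine Eventually.of_forall fun h => ?_
  rw [quad_add]
  have : 0 ≤ θ * ‖h‖ ^ 2 := by positivity
  linarith

theorem hasFDerivAt_quad {n : ℕ} (A : SymMat n) (c : ℝ) (x : Euc n) :
    HasFDerivAt (fun y => c * bilin (A : Matrix (Fin n) (Fin n) ℝ) y y)
      ((2 * c) • bl (A : Matrix (Fin n) (Fin n) ℝ) x) x := by
  rw [hasFDerivAt_iff_isLittleO_nhds_zero]
  have : (fun h : Euc n => c * bilin (A : Matrix (Fin n) (Fin n) ℝ) (x + h) (x + h)
      - c * bilin (A : Matrix (Fin n) (Fin n) ℝ) x x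
      - ((2 * c) • bl (A : Matrix (Fin n) (Fin n) ℝ) x) h) =
      fun h => c * bl (A : Matrix (Fin n) (Fin n) ℝ) h h := by
    ext h; rw [quad_add, bl_apply]; ring
  rw [this]
  have hO : (fun h : Euc n => c * bl (A : Matrix (Fin n) (Fin n) ℝ) h h) =O[𝓝 0]
      fun h => ‖h‖ ^ 2 := by
    refine IsBigO.of_bound (|c| * ‖bl (A : Matrix (Fin n) (Fin n) ℝ)‖) (Eventually.of_forall fun h => ?_)
    have := (bl (A : Matrix (Fin n) (Fin n) ℝ)).le_opNorm₂ h h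
    rw [norm_mul, Real.norm_eq_abs c, norm_pow, norm_norm, mul_assoc, pow_two, ← mul_assoc ‖bl _‖]
    gcongr
  refine hO.trans_isLittleO ?_
  exact (isLittleO_norm_pow_id one_lt_two)

theorem hess_quad {n : ℕ} (A : SymMat n) (x : Euc n) :
    hessMat (fun y => (-1/2) * bilin (A : Matrix (Fin n) (Fin n) ℝ) y y) x
      = ((-A : SymMat n) : Matrix (Fin n) (Fin n) ℝ) := by
  have h1 : fderiv ℝ (fun y : Euc n => (-1/2) * bilin (A : Matrix (Fin n) (Fin n) ℝ) y y) =
      fun x => (- bl (A : Matrix (Fin n) (Fin n) ℝ)) x := by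
    funext y
    rw [(hasFDerivAt_quad A (-1/2) y).fderiv]
    ext h; simp; ring
  ext i j
  unfold hessMat
  rw [iteratedFDeriv_two_apply, h1, ContinuousLinearMap.fderiv]
  simp only [Matrix.cons_val_zero, Matrix.cons_val_one, neg_apply, bl_apply]
  simp [bilin]

theorem contDiff_quad {n : ℕ} (A : SymMat n) (c : ℝ) :
    ContDiff ℝ 2 (fun y : Euc n => c * bilin (A : Matrix (Fin n) (Fin n) ℝ) y y) := by
  unfold bilin
  fun_prop

theorem visc_of_type {n : ℕ} {F : Set (SymMat n)} (hF : IsDirichletSet F) {X : Set (Euc n)}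
    (hX : IsOpen X) {u : Euc n → ℝ} (hu : IsTypeF F X (fun x => (u x : EReal))) :
    Visc F X u := by
  intro x hx A L hL
  refine mem_of_forall_add hF.isClosed A fun ε hε => ?_
  by_contra hA
  set A' := A + ε • symOne n with hA'
  have htype : IsTypeFC2 (dirDual F) X
      (fun y => (-1/2) * bilin (A' : Matrix (Fin n) (Fin n) ℝ) y y) := by
    refine ⟨(contDiff_quad A' _).contDiffOn, fun y _ => ⟨-A', ?_, (hess_quad A' y).symm⟩⟩
    simp only [dirDual, mem_ofPred_eq, neg_neg]
    exact fun h => hA (interior_subset h)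
  have hs := hu _ htype
  have hev : ∀ᶠ h in 𝓝 (0 : Euc n), x + h ∈ X := (tendsto_add_zero x).eventually (hX.mem_nhds hx)
  obtain ⟨r, hr, hball⟩ := Metric.eventually_nhds_iff_ball.1 (hL.and hev)
  set s := r / 2 with hs'
  have hspos : 0 < s := by positivity
  have hK : closedBall x s ⊆ X := by
    intro y hy
    have := (hball (y - x) (by
      rw [mem_ball_zero_iff, ← dist_eq_norm]
      have : dist y x ≤ s := hy
      linarith)).2
    simpa using this
  let ℓ : Euc n →L[ℝ] ℝ := L - bl (A' : Matrix (Fin n) (Fin n) ℝ) x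
  let c : ℝ := u x - 1/2 * bilin (A' : Matrix (Fin n) (Fin n) ℝ) x x - 1/2 * ε * s ^ 2
  let a : Euc n →ᵃ[ℝ] ℝ := ℓ.toLinearMap.toAffineMap + AffineMap.const ℝ _ (c - ℓ x)
  have ha : ∀ h, a (x + h) = c + ℓ h := by
    intro h; simp [a]; ring
  have hfr : ∀ y ∈ frontier (closedBall x s), (u y : EReal) +
      (((-1/2) * bilin (A' : Matrix (Fin n) (Fin n) ℝ) y y : ℝ) : EReal) ≤ (a y : EReal) := by
    intro y hy
    rw [frontier_closedBall x hspos.ne', mem_sphere, dist_eq_norm] at hy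
    obtain ⟨h, rfl⟩ : ∃ h, y = x + h := ⟨y - x, by simp⟩
    rw [add_sub_cancel_left] at hy
    rw [← EReal.coe_add, EReal.coe_le_coe_iff, ha, quad_add]
    have h1 := (hball h (by rw [mem_ball_zero_iff]; linarith)).1
    have h2 : bilin (A' : Matrix (Fin n) (Fin n) ℝ) h h =
      bilin (A : Matrix (Fin n) (Fin n) ℝ) h h + ε * ‖h‖ ^ 2 := bilin_smul_one A ε h
    rw [h2, hy]
    simp only [ℓ, c, sub_apply, smul_apply, smul_eq_mul]
    linarith
  have := hs _ (isCompact_closedBall x s) hK a hfr x (mem_closedBall_self hspos.le)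
  have this : (u x : EReal) + (((-1/2) * bilin (A' : Matrix (Fin n) (Fin n) ℝ) x x : ℝ) : EReal)
    ≤ (a x : EReal) := this
  rw [← EReal.coe_add, EReal.coe_le_coe_iff] at this
  have ha0 := ha 0
  rw [add_zero, map_zero] at ha0
  rw [ha0] at this
  simp only [c] at this
  have : 0 < ε * s ^ 2 := by positivity
  linarith

theorem type_of_visc {n : ℕ} {F : Set (SymMat n)} (hF : IsDirichletSet F) {X : Set (Euc n)}
    (hX : IsOpen X) {u : Euc n → ℝ} (hc : ContinuousOn u X) (hu : Visc F X u) :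
    IsTypeF F X (fun x => (u x : EReal)) := by
  intro v hv K hK hKX a ha x₀ hx₀
  have ha' : ∀ x ∈ frontier K, u x + v x - a x ≤ 0 := by
    intro x hx
    have : (u x : EReal) + (v x : EReal) ≤ (a x : EReal) := ha x hx
    rw [← EReal.coe_add, EReal.coe_le_coe_iff] at this
    linarith
  suffices hsuff : u x₀ + v x₀ ≤ a x₀ by
    show (u x₀ : EReal) + (v x₀ : EReal) ≤ (a x₀ : EReal)
    rw [← EReal.coe_add, EReal.coe_le_coe_iff]
    exact hsuff
  by_contra hlt
  push Not at hlt
  obtain ⟨R, hR⟩ := hK.isBounded.exists_norm_le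
  set m := u x₀ + v x₀ - a x₀ with hm
  have hmpos : 0 < m := by linarith
  have hR0 : 0 ≤ R := (norm_nonneg x₀).trans (hR x₀ hx₀)
  set ε := m / (R ^ 2 + 1) with hε
  have hεpos : 0 < ε := by positivity
  have hεR : ε * R ^ 2 < m := by
    rw [hε, div_mul_eq_mul_div, div_lt_iff₀ (by positivity)]
    nlinarith
  have hca : Continuous a := a.continuous_of_finiteDimensional
  have hcw : ContinuousOn (fun y => u y + v y - a y + ε * ‖y‖ ^ 2) K := by
    refine ((hc.mono hKX).add (hv.1.continuousOn.mono hKX)).sub hca.continuousOn |>.add ?_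
    fun_prop
  obtain ⟨x, hxK, hmax⟩ := hK.exists_isMaxOn ⟨x₀, hx₀⟩ hcw
  have hmax' : ∀ y ∈ K, u y + v y - a y + ε * ‖y‖ ^ 2 ≤ u x + v x - a x + ε * ‖x‖ ^ 2 :=
    fun y hy => hmax hy
  have hxint : x ∈ interior K := by
    by_contra hni
    have hfr : x ∈ frontier K := by
      rw [frontier, hK.isClosed.closure_eq]; exact ⟨hxK, hni⟩
    have h1 := ha' x hfr
    have h2 := hmax' x₀ hx₀
    have h3 : ‖x‖ ^ 2 ≤ R ^ 2 := by have := hR x hxK; gcongr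
    have h4 : ε * ‖x‖ ^ 2 ≤ ε * R ^ 2 := by gcongr
    have h5 : 0 ≤ ε * ‖x₀‖ ^ 2 := by positivity
    linarith
  obtain ⟨H, hH, hHe⟩ := hv.2 x (hKX hxK)
  have hev : ∀ᶠ h in 𝓝 (0 : Euc n), x + h ∈ K :=
    (tendsto_add_zero x).eventually (mem_interior_iff_mem_nhds.1 hxint)
  have hT := taylor2 (hv.1.contDiffAt (hX.mem_nhds (hKX hxK))) (half_pos hεpos)
  have hmem : -H + (-ε) • symOne n ∈ F := by
    refine hu x (hKX hxK) _ (a.linear.toContinuousLinearMap - fderiv ℝ v x - (2 * ε) • innerSL ℝ x) ?_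
    filter_upwards [hev, hT] with h h1 h2
    rw [← bilin_hess, ← hHe] at h2
    have h3 := hmax' _ h1
    have h4 := (abs_le.1 h2).1
    rw [bilin_smul_one]
    have e1 : ((-H : SymMat n) : Matrix (Fin n) (Fin n) ℝ) = -(H : Matrix (Fin n) (Fin n) ℝ) := rfl
    rw [e1, bilin_neg_mat]
    have e2 : a (x + h) = a x + a.linear h := by
      have := a.map_vadd x h
      simpa [add_comm] using this
    have e3 : ‖x + h‖ ^ 2 = ‖x‖ ^ 2 + 2 * ⟪x, h⟫ + ‖h‖ ^ 2 := norm_add_sq_real x h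
    simp only [sub_apply, smul_apply, smul_eq_mul, innerSL_apply_apply, LinearMap.coe_toContinuousLinearMap']
    rw [e2, e3] at h3
    linarith
  exact hH ((mem_interior_iff' hF.add_psd _).2 ⟨ε, hεpos, hmem⟩)

/-- semiconvexity with a selection of subgradients -/
def SC {n : ℕ} (Λ : ℝ) (U : Euc n → ℝ) (q : Euc n → Euc n) : Prop :=
  ∀ y z, U y + ⟪q y, z - y⟫ - Λ / 2 * ‖z - y‖ ^ 2 ≤ U z

theorem jl1 {n : ℕ} {Λ s : ℝ} (hΛ : 0 < Λ) (hs : 0 < s) {U V : Euc n → ℝ} {qU qV : Euc n → Euc n}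
    (hU : SC Λ U qU) (hV : SC Λ V qV) {x p : Euc n}
    (hx : ∀ z ∈ ball x s, U z + V z ≤ U x + V x + ⟪p, z - x⟫) : p = qU x + qV x := by
  set d := qU x + qV x - p with hd
  by_contra hne
  have hd0 : d ≠ 0 := fun h => hne (by rw [sub_eq_zero] at h; exact h.symm)
  have hdp : 0 < ‖d‖ := norm_pos_iff.2 hd0
  set t := min (1 / (2 * Λ)) (s / (2 * ‖d‖)) with ht
  have htp : 0 < t := lt_min (by positivity) (by positivity)
  have h1 : t * ‖d‖ < s := by
    have : t ≤ s / (2 * ‖d‖) := min_le_right _ _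
    rw [le_div_iff₀ (by positivity)] at this
    nlinarith
  have h2 : t * Λ < 1 := by
    have : t ≤ 1 / (2 * Λ) := min_le_left _ _
    rw [le_div_iff₀ (by positivity)] at this
    nlinarith
  have h3 := hx (x + t • d) (by
    rw [mem_ball, dist_eq_norm, add_sub_cancel_left, norm_smul, Real.norm_eq_abs, abs_of_pos htp]
    exact h1)
  have h4 := hU x (x + t • d)
  have h5 := hV x (x + t • d)
  rw [add_sub_cancel_left] at h3 h4 h5
  have e1 : ‖t • d‖ ^ 2 = t ^ 2 * ‖d‖ ^ 2 := by
    rw [norm_smul, mul_pow, Real.norm_eq_abs, sq_abs]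
  rw [inner_smul_right] at h3 h4 h5
  rw [e1] at h4 h5
  have e2 : ‖d‖ ^ 2 = ⟪qU x, d⟫ + ⟪qV x, d⟫ - ⟪p, d⟫ := by
    rw [← inner_add_left, ← inner_sub_left, ← hd, real_inner_self_eq_norm_sq]
  have h6 : t * ‖d‖ ^ 2 ≤ t * ‖d‖ ^ 2 * (t * Λ) := by
    calc t * ‖d‖ ^ 2 = t * ⟪qU x, d⟫ + t * ⟪qV x, d⟫ - t * ⟪p, d⟫ := by rw [e2]; ring
      _ ≤ Λ * (t ^ 2 * ‖d‖ ^ 2) := by linarith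
      _ = _ := by ring
  have : 0 < t * ‖d‖ ^ 2 := by positivity
  nlinarith

theorem jl2 {n : ℕ} {Λ s : ℝ} {U : Euc n → ℝ} {q : Euc n → Euc n}
    (hU : SC Λ U q) {x : Euc n}
    (hx : ∀ z ∈ ball x s, U z ≤ U x + ⟪q x, z - x⟫ + Λ / 2 * ‖z - x‖ ^ 2) {y : Euc n}
    (hΛ : 0 < Λ) (hy : 2 * ‖y - x‖ < s) : ‖q y - q x‖ ≤ 3 * Λ * ‖y - x‖ := by
  set r := ‖y - x‖ with hr
  set d := q y - q x with hd
  rcases eq_or_lt_of_le (norm_nonneg (y - x)) with h0 | h0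
  · have : y = x := by rw [← sub_eq_zero, ← norm_eq_zero]; exact h0.symm
    subst this
    simp [hd, hr]
  rw [← hr] at h0
  by_cases hd0 : d = 0
  · rw [hd0, norm_zero]; positivity
  have hdp : 0 < ‖d‖ := norm_pos_iff.2 hd0
  set c := (r / ‖d‖) • d with hc
  have hcn : ‖c‖ = r := by
    rw [hc, norm_smul, Real.norm_eq_abs, abs_of_pos (by positivity)]; field_simp
  have hz : ‖y + c - x‖ ≤ 2 * r := by
    have : y + c - x = (y - x) + c := by abel
    rw [this]
    refine (norm_add_le _ _).trans ?_
    rw [hcn]; linarith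
  have h1 := hx (y + c) (by rw [mem_ball, dist_eq_norm]; linarith)
  have h2 := hU y (y + c)
  have h3 := hU x y
  rw [add_sub_cancel_left, hcn] at h2
  have e1 : ⟪q x, y + c - x⟫ = ⟪q x, y - x⟫ + ⟪q x, c⟫ := by
    rw [← inner_add_right]; congr 1; abel
  have e2 : ⟪q y, c⟫ - ⟪q x, c⟫ = r * ‖d‖ := by
    rw [← inner_sub_left, ← hd, hc, inner_smul_right, real_inner_self_eq_norm_sq]
    field_simp
  have h4 : ‖y + c - x‖ ^ 2 ≤ (2 * r) ^ 2 := by gcongr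
  have h5 : Λ / 2 * ‖y + c - x‖ ^ 2 ≤ Λ / 2 * (2 * r) ^ 2 := by gcongr
  rw [← hr] at h3
  have h6 : r * ‖d‖ ≤ r * (3 * Λ * r) := by
    rw [← e2]; rw [e1] at h1; nlinarith
  exact le_of_mul_le_mul_left h6 h0

theorem jl3 {n : ℕ} {q : Euc n → Euc n} {A : Euc n →L[ℝ] Euc n} {S : Set (Euc n)} {x : Euc n}
    (hx : x ∈ S) (hq : HasFDerivWithinAt q A S x) {C s : ℝ} (hC : 0 ≤ C) (hs : 0 < s)
    (hl : ∀ y ∈ S, ∀ z, ‖z - y‖ < s → ‖q z - q y‖ ≤ C * ‖z - y‖)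
    (hD : DifferentiableAt ℝ (fun y => infDist y S) x) : HasFDerivAt q A x := by
  have hd0 : HasFDerivAt (fun y => infDist y S) (0 : Euc n →L[ℝ] ℝ) x := by
    have h1 : IsLocalMin (fun y => infDist y S) x := by
      refine Eventually.of_forall fun y => ?_
      show infDist x S ≤ infDist y S
      rw [infDist_zero_of_mem hx]; exact infDist_nonneg
    have := hD.hasFDerivAt
    rwa [h1.hasFDerivAt_eq_zero this] at this
  rw [hasFDerivAt_iff_isLittleO]
  refine IsLittleO.of_bound fun c hc => ?_
  set K := 2 * C + 3 + 2 * ‖A‖ with hK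
  have hKp : 0 < K := by positivity
  set ε := min 1 (c / K) with hε
  have hεp : 0 < ε := lt_min one_pos (by positivity)
  have hε1 : ε ≤ 1 := min_le_left _ _
  have hεc : ε * K ≤ c := by
    have : ε ≤ c / K := min_le_right _ _
    rwa [le_div_iff₀ hKp] at this
  have h1 := (hasFDerivAt_iff_isLittleO.1 hd0).def hεp
  have h2 := (hasFDerivWithinAt_iff_isLittleO.1 hq).def hεp
  rw [eventually_nhdsWithin_iff] at h2
  obtain ⟨r, hr, h2⟩ := Metric.eventually_nhds_iff_ball.1 h2
  filter_upwards [h1, Metric.ball_mem_nhds x (show 0 < min (r / 3) (s / 2) by positivity)] with y hy hyb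
  rcases eq_or_ne y x with rfl | hne
  · simp
  have hyp : 0 < ‖y - x‖ := norm_pos_iff.2 (sub_ne_zero.2 hne)
  rw [mem_ball, dist_eq_norm] at hyb
  have hb1 := hyb.trans_le (min_le_left _ _)
  have hb2 := hyb.trans_le (min_le_right _ _)
  have h3 : infDist y S < 2 * ε * ‖y - x‖ := by
    rw [infDist_zero_of_mem hx] at hy
    simp only [sub_zero, zero_apply, Real.norm_eq_abs, abs_of_nonneg infDist_nonneg] at hy
    have : 0 < ε * ‖y - x‖ := by positivity
    linarith
  obtain ⟨y', hy', hyy⟩ := (infDist_lt_iff ⟨x, hx⟩).1 h3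
  rw [dist_eq_norm] at hyy
  have hyy2 : ‖y - y'‖ < 2 * ‖y - x‖ := by nlinarith
  have h4 : ‖y' - x‖ ≤ ‖y - y'‖ + ‖y - x‖ := by
    have : y' - x = -(y - y') + (y - x) := by abel
    rw [this]; refine (norm_add_le _ _).trans ?_; rw [norm_neg]
  have h5 := h2 y' (by rw [mem_ball, dist_eq_norm]; linarith) hy'
  have h6 := hl y' hy' y (by linarith)
  have h7 := A.le_opNorm (y' - y)
  have e : q y - q x - A (y - x) = (q y - q y') + (q y' - q x - A (y' - x)) + A (y' - y) := by
    simp only [map_sub]; abel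
  rw [e]
  refine (norm_add₃_le).trans ?_
  rw [norm_sub_rev y' y] at h7
  have h8 : ‖A‖ * ‖y - y'‖ ≤ ‖A‖ * (2 * ε * ‖y - x‖) := by gcongr
  have h9 : C * ‖y - y'‖ ≤ C * (2 * ε * ‖y - x‖) := by gcongr
  have h10 : ε * ‖y' - x‖ ≤ ε * (3 * ‖y - x‖) := by gcongr; linarith
  calc _ ≤ C * (2 * ε * ‖y - x‖) + ε * (3 * ‖y - x‖) + ‖A‖ * (2 * ε * ‖y - x‖) := by linarith
    _ = (ε * K) * ‖y - x‖ := by rw [hK]; ring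
    _ ≤ c * ‖y - x‖ := by gcongr

theorem chain1 {G : ℝ → ℝ} {a C : ℝ}
    (h : ∀ t δ : ℝ, 0 ≤ t → 0 ≤ δ → t + δ ≤ 1 → |G (t + δ) - G t| ≤ a * δ + C * δ ^ 2) :
    |G 1 - G 0| ≤ a := by
  have key : ∀ N : ℕ, 0 < N → |G 1 - G 0| ≤ a + C * (1 / (N : ℝ)) := by
    intro N hN
    have hN' : (0:ℝ) < N := by exact_mod_cast hN
    have ind : ∀ k : ℕ, k ≤ N → |G (k / N) - G 0| ≤ k * (a * (1 / N) + C * (1 / (N:ℝ)) ^ 2) := by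
      intro k
      induction k with
      | zero => intro _; simp
      | succ k ih =>
        intro hk
        have h1 := ih (by omega)
        have hk' : (k : ℝ) + 1 ≤ N := by exact_mod_cast hk
        have h2 := h (k / N) (1 / N) (by positivity) (by positivity) (by
          rw [← add_div, div_le_one hN']; exact hk')
        push_cast
        rw [add_div]
        have := abs_sub_le (G (k / N + 1 / N)) (G (k / N)) (G 0)
        linarith
    have := ind N le_rfl
    rw [div_self hN'.ne'] at this
    refine this.trans (le_of_eq ?_)
    field_simp
  have ht : Tendsto (fun N : ℕ => a + C * (1 / (N : ℝ))) atTop (𝓝 (a + C * 0)) :=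
    (tendsto_one_div_atTop_nhds_zero_nat.const_mul C).const_add a
  rw [mul_zero, add_zero] at ht
  exact ge_of_tendsto ht (eventually_gt_atTop 0 |>.mono key)

theorem jl4 {n : ℕ} {Λ : ℝ} {U : Euc n → ℝ} {q : Euc n → Euc n}
    (hU : SC Λ U q) {A : Euc n →L[ℝ] Euc n} {x : Euc n} (hq : HasFDerivAt q A x)
    {θ : ℝ} (hθ : 0 < θ) : ∀ᶠ h in 𝓝 (0 : Euc n),
      |U (x + h) - U x - ⟪q x, h⟫ - 1 / 2 * ⟪A h, h⟫| ≤ θ * ‖h‖ ^ 2 := by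
  have h1 := (hasFDerivAt_iff_isLittleO_nhds_zero.1 hq).def hθ
  obtain ⟨r, hr, h2⟩ := Metric.eventually_nhds_iff_ball.1 h1
  filter_upwards [Metric.ball_mem_nhds (0 : Euc n) hr] with h hh
  have hh' : ‖h‖ < r := by simpa using hh
  have he : ∀ t ∈ Icc (0:ℝ) 1, |⟪q (x + t • h), h⟫ - ⟪q x, h⟫ - t * ⟪A h, h⟫| ≤ θ * ‖h‖ ^ 2 := by
    intro t ht
    have hth : ‖t • h‖ ≤ ‖h‖ := by
      rw [norm_smul, Real.norm_eq_abs, abs_of_nonneg ht.1]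
      have := norm_nonneg h
      nlinarith [ht.2]
    have h3 := h2 (t • h) (by rw [mem_ball_zero_iff]; linarith)
    have h4 := abs_real_inner_le_norm (q (x + t • h) - q x - A (t • h)) h
    rw [inner_sub_left, inner_sub_left, map_smul, real_inner_smul_left] at h4
    refine h4.trans ?_
    rw [map_smul] at h3
    calc _ ≤ (θ * ‖h‖) * ‖h‖ := by gcongr; exact h3.trans (by gcongr)
      _ = _ := by ring
  let G : ℝ → ℝ := fun t => U (x + t • h) - t * ⟪q x, h⟫ - t ^ 2 / 2 * ⟪A h, h⟫
  have := chain1 (G := G) (a := θ * ‖h‖ ^ 2) (C := |⟪A h, h⟫| / 2 + Λ / 2 * ‖h‖ ^ 2) (by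
    intro t δ ht hδ htδ
    have a1 := hU (x + t • h) (x + (t + δ) • h)
    have a2 := hU (x + (t + δ) • h) (x + t • h)
    have e1 : x + (t + δ) • h - (x + t • h) = δ • h := by
      rw [add_smul]; abel
    have e2 : x + t • h - (x + (t + δ) • h) = (-δ) • h := by
      rw [add_smul, neg_smul]; abel
    rw [e1, inner_smul_right, norm_smul, mul_pow, Real.norm_eq_abs, sq_abs] at a1
    rw [e2, inner_smul_right, norm_smul, mul_pow, Real.norm_eq_abs, sq_abs, neg_sq] at a2
    have b1 := abs_le.1 (he t ⟨ht, by linarith⟩)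
    have b2 := abs_le.1 (he (t + δ) ⟨by linarith, htδ⟩)
    have c1 := mul_le_mul_of_nonneg_left b1.1 hδ
    have c2 := mul_le_mul_of_nonneg_left b2.2 hδ
    have c3 := mul_le_mul_of_nonneg_left (le_abs_self ⟪A h, h⟫) (sq_nonneg δ)
    have c4 := mul_le_mul_of_nonneg_left (neg_abs_le ⟪A h, h⟫) (sq_nonneg δ)
    rw [abs_le]
    simp only [G]
    constructor <;> nlinarith)
  simp only [G] at this
  convert this using 2
  simp
  ring

theorem null_image {n : ℕ} {P : Euc n → Euc n} {S : Set (Euc n)} {C : NNReal}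
    (hP : LipschitzOnWith C P S) (hS : volume S = 0) : volume (P '' S) = 0 := by
  have h1 : (Measure.hausdorffMeasure (n : ℝ) : Measure (Euc n)) S = 0 := by
    have : (Measure.hausdorffMeasure (n : ℝ) : Measure (Euc n)) ≪ volume :=
      Measure.absolutelyContinuous_isAddHaarMeasure _ _
    exact this hS
  have h2 := hP.hausdorffMeasure_image_le (d := n) (by positivity)
  rw [h1, mul_zero] at h2
  have : (volume : Measure (Euc n)) ≪ Measure.hausdorffMeasure (n : ℝ) :=
    Measure.absolutelyContinuous_isAddHaarMeasure _ _
  exact this (le_antisymm h2 bot_le)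

theorem sym_of_clm {n : ℕ} (A : Euc n →L[ℝ] Euc n) : ∃ M : SymMat n, ∀ h : Euc n,
    bilin M.1 h h = ⟪A h, h⟫ := by
  let a : Matrix (Fin n) (Fin n) ℝ := fun i j => (A (EuclideanSpace.single i 1)) j
  refine ⟨⟨(1/2 : ℝ) • (a + a.transpose), ?_⟩, fun h => ?_⟩
  · rw [selfAdjoint.mem_iff, Matrix.star_eq_conjTranspose]
    ext i j
    simp; ring
  · have e : ∀ v : Euc n, v = ∑ i, v i • (EuclideanSpace.single i (1:ℝ) : Euc n) := by
      intro v
      ext j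
      simp [Finset.sum_apply, Pi.single_apply]
    have e1 : bilin a h h = ⟪A h, h⟫ := by
      have e3 : A h = ∑ i, h i • A (EuclideanSpace.single i (1:ℝ) : Euc n) := by
        conv_lhs => rw [e h]
        simp only [map_sum, map_smul]
      rw [e3, sum_inner]
      simp only [map_smul, real_inner_smul_left, bilin]
      refine Finset.sum_congr rfl fun i _ => ?_
      rw [PiLp.inner_apply, Finset.mul_sum]
      refine Finset.sum_congr rfl fun j _ => ?_
      simp [a]; ring
    have e2 : bilin a.transpose h h = bilin a h h := by
      unfold bilin
      rw [Finset.sum_comm]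
      refine Finset.sum_congr rfl fun i _ => Finset.sum_congr rfl fun j _ => ?_
      rw [Matrix.transpose_apply]; ring
    show bilin ((1/2 : ℝ) • (a + a.transpose)) h h = _
    rw [bilin_smul_mat, bilin_add_mat, e2, e1]; ring

theorem jensen {n : ℕ} {Λ s κ M : ℝ} (hΛ : 0 < Λ) (hs : 0 < s) (hκ : 0 < κ)
    {U V : Euc n → ℝ} {qU qV : Euc n → Euc n} (hU : SC Λ U qU) (hV : SC Λ V qV) {S : Set (Euc n)}
    (hS : ∀ x ∈ S, ∃ p, ∀ z ∈ ball x s, U z + V z ≤ U x + V x + ⟪p, z - x⟫)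
    (hsur : ∀ p ∈ ball (0 : Euc n) κ, ∃ x ∈ S, ∀ z ∈ ball x s,
      U z + V z ≤ U x + V x + ⟪p, z - x⟫)
    (hM : ∀ x ∈ S, ‖qU x‖ ≤ M ∧ ‖qV x‖ ≤ M) :
    ∃ x ∈ S, ∃ A B : SymMat n, ∃ L₁ L₂ : Euc n →L[ℝ] ℝ,
      (∀ θ : ℝ, 0 < θ → ∀ᶠ h in 𝓝 (0 : Euc n),
        U (x + h) ≤ U x + L₁ h + 1 / 2 * bilin A.1 h h + θ * ‖h‖ ^ 2) ∧
      (∀ θ : ℝ, 0 < θ → ∀ᶠ h in 𝓝 (0 : Euc n),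
        V (x + h) ≤ V x + L₂ h + 1 / 2 * bilin B.1 h h + θ * ‖h‖ ^ 2) ∧
      ∀ h, bilin A.1 h h + bilin B.1 h h ≤ 0 := by
  have hM0 : 0 ≤ M := by
    obtain ⟨x, hx, -⟩ := hsur 0 (mem_ball_self hκ)
    exact (norm_nonneg _).trans (hM x hx).1
  have hupU : ∀ x ∈ S, ∀ z ∈ ball x s, U z ≤ U x + ⟪qU x, z - x⟫ + Λ / 2 * ‖z - x‖ ^ 2 := by
    intro x hx z hz
    obtain ⟨p, hp⟩ := hS x hx
    have h1 := hp z hz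
    rw [jl1 hΛ hs hU hV hp, inner_add_left] at h1
    have h2 := hV x z
    linarith
  have hupV : ∀ x ∈ S, ∀ z ∈ ball x s, V z ≤ V x + ⟪qV x, z - x⟫ + Λ / 2 * ‖z - x‖ ^ 2 := by
    intro x hx z hz
    obtain ⟨p, hp⟩ := hS x hx
    have h1 := hp z hz
    rw [jl1 hΛ hs hU hV hp, inner_add_left] at h1
    have h2 := hU x z
    linarith
  have hlU : ∀ x ∈ S, ∀ y, ‖y - x‖ < s / 2 → ‖qU y - qU x‖ ≤ 3 * Λ * ‖y - x‖ :=
    fun x hx y hy => jl2 hU (hupU x hx) hΛ (by linarith)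
  have hlV : ∀ x ∈ S, ∀ y, ‖y - x‖ < s / 2 → ‖qV y - qV x‖ ≤ 3 * Λ * ‖y - x‖ :=
    fun x hx y hy => jl2 hV (hupV x hx) hΛ (by linarith)
  set C := 3 * Λ + 4 * M / s with hC
  have hC0 : 0 ≤ C := by positivity
  have lip : ∀ q : Euc n → Euc n, (∀ x ∈ S, ‖q x‖ ≤ M) →
      (∀ x ∈ S, ∀ y, ‖y - x‖ < s / 2 → ‖q y - q x‖ ≤ 3 * Λ * ‖y - x‖) →
      LipschitzOnWith C.toNNReal q S := by
    intro q hq hl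
    refine LipschitzOnWith.of_dist_le_mul fun y hy x hx => ?_
    rw [Real.coe_toNNReal _ hC0, dist_eq_norm, dist_eq_norm]
    have hn := norm_nonneg (y - x)
    by_cases h : ‖y - x‖ < s / 2
    · refine (hl x hx y h).trans ?_
      have : 0 ≤ 4 * M / s := by positivity
      gcongr; linarith
    · have h1 := norm_sub_le (q y) (q x)
      have h2 := hq x hx
      have h3 := hq y hy
      have h4 : 4 * M / s * (s / 2) ≤ 4 * M / s * ‖y - x‖ := by gcongr; linarith
      have h5 : 4 * M / s * (s / 2) = 2 * M := by field_simp; ring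
      have h6 : 0 ≤ 3 * Λ * ‖y - x‖ := by positivity
      rw [hC]; linarith
  have lU := lip qU (fun x hx => (hM x hx).1) hlU
  have lV := lip qV (fun x hx => (hM x hx).2) hlV
  have hvol : volume S ≠ 0 := by
    intro h0
    have h1 := null_image (lU.add lV) h0
    have h2 : ball (0 : Euc n) κ ⊆ (fun x => qU x + qV x) '' S := by
      intro p hp
      obtain ⟨x, hx, h⟩ := hsur p hp
      exact ⟨x, hx, (jl1 hΛ hs hU hV h).symm⟩
    have h3 : volume (ball (0 : Euc n) κ) = 0 := measure_mono_null h2 h1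
    exact (measure_ball_pos volume (0 : Euc n) hκ).ne' h3
  obtain ⟨x, hx, hdU, hdV, hdd⟩ : ∃ x ∈ S, DifferentiableWithinAt ℝ qU S x ∧
      DifferentiableWithinAt ℝ qV S x ∧ DifferentiableAt ℝ (fun y => infDist y S) x := by
    by_contra hcon
    push Not at hcon
    apply hvol
    have h1 := lU.ae_differentiableWithinAt_of_mem (μ := volume)
    have h2 := lV.ae_differentiableWithinAt_of_mem (μ := volume)
    have h3 := (lipschitz_infDist_pt S).ae_differentiableAt (μ := volume)
    have h4 : ∀ᵐ x ∂(volume : Measure (Euc n)), x ∉ S := by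
      filter_upwards [h1, h2, h3] with x h1 h2 h3 hx
      exact hcon x hx (h1 hx) (h2 hx) h3
    rw [ae_iff] at h4
    simpa using h4
  have hdU' := jl3 hx hdU.hasFDerivWithinAt (by positivity) (half_pos hs) hlU hdd
  have hdV' := jl3 hx hdV.hasFDerivWithinAt (by positivity) (half_pos hs) hlV hdd
  obtain ⟨A, hA⟩ := sym_of_clm (fderivWithin ℝ qU S x)
  obtain ⟨B, hB⟩ := sym_of_clm (fderivWithin ℝ qV S x)
  obtain ⟨p, hp⟩ := hS x hx
  have tU : ∀ θ : ℝ, 0 < θ → ∀ᶠ h in 𝓝 (0 : Euc n),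
      |U (x + h) - U x - ⟪qU x, h⟫ - 1 / 2 * bilin A.1 h h| ≤ θ * ‖h‖ ^ 2 := by
    intro θ hθ
    filter_upwards [jl4 hU hdU' hθ] with h hh
    rwa [hA]
  have tV : ∀ θ : ℝ, 0 < θ → ∀ᶠ h in 𝓝 (0 : Euc n),
      |V (x + h) - V x - ⟪qV x, h⟫ - 1 / 2 * bilin B.1 h h| ≤ θ * ‖h‖ ^ 2 := by
    intro θ hθ
    filter_upwards [jl4 hV hdV' hθ] with h hh
    rwa [hB]
  refine ⟨x, hx, A, B, innerSL ℝ (qU x), innerSL ℝ (qV x), ?_, ?_, ?_⟩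
  · intro θ hθ
    filter_upwards [tU θ hθ] with h hh
    have := (abs_le.1 hh).2
    rw [innerSL_apply_apply]; linarith
  · intro θ hθ
    filter_upwards [tV θ hθ] with h hh
    have := (abs_le.1 hh).2
    rw [innerSL_apply_apply]; linarith
  · intro h
    have := quad_cmp (A := A + B) (B := 0) (L := 0) (by
      intro θ hθ
      filter_upwards [tU (θ / 4) (by positivity), tV (θ / 4) (by positivity),
        Metric.ball_mem_nhds (0 : Euc n) hs] with h h1 h2 h3
      have h4 := hp (x + h) (by simpa [dist_eq_norm] using h3)
      rw [add_sub_cancel_left, jl1 hΛ hs hU hV hp, inner_add_left] at h4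
      have e : ((A + B : SymMat n) : Matrix (Fin n) (Fin n) ℝ) = A.1 + B.1 := rfl
      have e0 : ((0 : SymMat n) : Matrix (Fin n) (Fin n) ℝ) = 0 := rfl
      have e1 : bilin (0 : Matrix (Fin n) (Fin n) ℝ) h h = 0 := by simp [bilin]
      rw [e, bilin_add_mat, e0, e1, zero_apply]
      have h5 := (abs_le.1 h1).1
      have h6 := (abs_le.1 h2).1
      linarith) h
    have e : ((A + B : SymMat n) : Matrix (Fin n) (Fin n) ℝ) = A.1 + B.1 := rfl
    have e0 : ((0 : SymMat n) : Matrix (Fin n) (Fin n) ℝ) = 0 := rfl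
    have e1 : bilin (0 : Matrix (Fin n) (Fin n) ℝ) h h = 0 := by simp [bilin]
    rw [e, bilin_add_mat, e0, e1] at this
    exact this

theorem supconv {n : ℕ} {K : Set (Euc n)} (hK : IsCompact K) (hne : K.Nonempty) {u : Euc n → ℝ}
    (hu : ContinuousOn u K) (Λ : ℝ) : ∃ (U : Euc n → ℝ) (Y : Euc n → Euc n), (∀ x, Y x ∈ K) ∧
      (∀ x, U x = u (Y x) - Λ / 2 * ‖x - Y x‖ ^ 2) ∧
      ∀ x, ∀ y ∈ K, u y - Λ / 2 * ‖x - y‖ ^ 2 ≤ U x := by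
  have h : ∀ x, ∃ y ∈ K, ∀ z ∈ K, u z - Λ / 2 * ‖x - z‖ ^ 2 ≤ u y - Λ / 2 * ‖x - y‖ ^ 2 := by
    intro x
    have hc : ContinuousOn (fun z => u z - Λ / 2 * ‖x - z‖ ^ 2) K := by
      refine hu.sub ?_
      fun_prop
    obtain ⟨y, hy, hm⟩ := hK.exists_isMaxOn hne hc
    exact ⟨y, hy, fun z hz => hm hz⟩
  choose Y hY hm using h
  exact ⟨fun x => u (Y x) - Λ / 2 * ‖x - Y x‖ ^ 2, Y, hY, fun _ => rfl, fun x y hy => hm x y hy⟩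

theorem supconv_sc {n : ℕ} {K : Set (Euc n)} {u U : Euc n → ℝ} {Y : Euc n → Euc n} {Λ : ℝ}
    (hY : ∀ x, Y x ∈ K) (h1 : ∀ x, U x = u (Y x) - Λ / 2 * ‖x - Y x‖ ^ 2)
    (h2 : ∀ x, ∀ y ∈ K, u y - Λ / 2 * ‖x - y‖ ^ 2 ≤ U x) : SC Λ U (fun x => Λ • (Y x - x)) := by
  intro x z
  have a := h2 z _ (hY x)
  rw [h1 x]
  have e : ‖z - Y x‖ ^ 2 = ‖z - x‖ ^ 2 - 2 * ⟪Y x - x, z - x⟫ + ‖x - Y x‖ ^ 2 := by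
    have e1 : z - Y x = (z - x) - (Y x - x) := by abel
    rw [e1, norm_sub_sq_real, real_inner_comm, norm_sub_rev (Y x) x]
  rw [e] at a
  rw [real_inner_smul_left]
  nlinarith

theorem sc_cont {n : ℕ} {K : Set (Euc n)} {U : Euc n → ℝ} {q : Euc n → Euc n} {Λ M R : ℝ}
    (hΛ : 0 < Λ) (h : SC Λ U q) (hM0 : 0 ≤ M) (hR0 : 0 ≤ R)
    (hM : ∀ x ∈ K, ‖q x‖ ≤ M) (hR : ∀ x ∈ K, ‖x‖ ≤ R) : ContinuousOn U K := by
  set C := M + Λ * R with hC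
  have hC0 : 0 ≤ C := by positivity
  have key : ∀ x ∈ K, ∀ y ∈ K, U x - U y ≤ C * ‖x - y‖ := by
    intro x hx y hy
    have h1 := h x y
    have h2 := abs_le.1 (abs_real_inner_le_norm (q x) (y - x))
    have h3 : ‖y - x‖ ≤ 2 * R := (norm_sub_le _ _).trans (by linarith [hR x hx, hR y hy])
    have hn := norm_nonneg (y - x)
    have h4 : ‖q x‖ * ‖y - x‖ ≤ M * ‖y - x‖ := by gcongr; exact hM x hx
    have h5 : Λ / 2 * ‖y - x‖ ^ 2 ≤ Λ / 2 * (2 * R * ‖y - x‖) := by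
      rw [pow_two]; gcongr
    rw [norm_sub_rev x y, hC]
    nlinarith
  refine (LipschitzOnWith.of_dist_le_mul (K := C.toNNReal) fun x hx y hy => ?_).continuousOn
  rw [Real.coe_toNNReal _ hC0, dist_eq_norm, dist_eq_norm, Real.norm_eq_abs, abs_le]
  have := key x hx y hy
  have := key y hy x hx
  rw [norm_sub_rev y x] at this
  constructor <;> linarith

theorem supconv_touch {n : ℕ} {F : Set (SymMat n)} {Ω : Set (Euc n)} (hΩ : IsOpen Ω)
    {u U : Euc n → ℝ} (hu : Visc F Ω u) {Y : Euc n → Euc n} {Λ : ℝ}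
    (h1 : ∀ x, U x = u (Y x) - Λ / 2 * ‖x - Y x‖ ^ 2)
    (h2 : ∀ x, ∀ y ∈ closure Ω, u y - Λ / 2 * ‖x - y‖ ^ 2 ≤ U x) {x : Euc n} (hx : Y x ∈ Ω)
    {A : SymMat n} {L : Euc n →L[ℝ] ℝ}
    (ht : ∀ᶠ h in 𝓝 (0 : Euc n), U (x + h) ≤ U x + L h + 1 / 2 * bilin A.1 h h) : A ∈ F := by
  refine hu (Y x) hx A L ?_
  filter_upwards [ht, (tendsto_add_zero (Y x)).eventually (hΩ.mem_nhds hx)] with h a b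
  have c := h2 (x + h) (Y x + h) (subset_closure b)
  have e : x + h - (Y x + h) = x - Y x := by abel
  rw [e] at c
  have := h1 x
  linarith

theorem ball_subO {n : ℕ} {Ω : Set (Euc n)} (hΩ : IsOpen Ω) {x : Euc n} {s : ℝ} (hs : 0 < s)
    (hx : x ∈ closure Ω) (hf : ∀ b ∈ frontier Ω, b ∉ ball x s) : ball x s ⊆ Ω := by
  have hxΩ : x ∈ Ω := by
    by_contra h
    refine hf x ?_ (mem_ball_self hs)
    rw [frontier, hΩ.interior_eq]; exact ⟨hx, h⟩
  refine (convex_ball x s).isPreconnected.subset_left_of_subset_union hΩ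
    (isClosed_closure (s := Ω)).isOpen_compl ?_ ?_ ⟨x, mem_ball_self hs, hxΩ⟩
  · exact disjoint_compl_right.mono_left subset_closure
  · intro y hy
    by_cases h : y ∈ Ω
    · exact Or.inl h
    · refine Or.inr fun hc => hf y ?_ hy
      rw [frontier, hΩ.interior_eq]; exact ⟨hc, h⟩

set_option maxHeartbeats 1000000 in
theorem comparison {n : ℕ} {F : Set (SymMat n)} (hF : IsDirichletSet F) {Ω : Set (Euc n)}
    (hΩ : IsOpen Ω) (hb : Bornology.IsBounded Ω) {u v : Euc n → ℝ}
    (hu : ContinuousOn u (closure Ω)) (hv : ContinuousOn v (closure Ω))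
    (hFu : Visc F Ω u) (hFv : Visc (dirDual F) Ω v)
    (hbd : ∀ x ∈ frontier Ω, u x + v x ≤ 0) : ∀ x ∈ closure Ω, u x + v x ≤ 0 := by
  intro x₀ hx₀
  by_contra hcon
  push Not at hcon
  have hK : IsCompact (closure Ω) := hb.isCompact_closure
  set K := closure Ω with hKdef
  set m := u x₀ + v x₀ with hm
  obtain ⟨R₀, hR₀⟩ := hK.isBounded.exists_norm_le
  set R := max R₀ 1 with hRdef
  have hR : ∀ x ∈ K, ‖x‖ ≤ R := fun x hx => (hR₀ x hx).trans (le_max_left _ _)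
  have hRpos : 0 < R := lt_of_lt_of_le one_pos (le_max_right _ _)
  obtain ⟨M₁, hM₁⟩ := hK.exists_bound_of_continuousOn hu
  obtain ⟨M₂, hM₂⟩ := hK.exists_bound_of_continuousOn hv
  set M := max M₁ M₂ with hMdef
  have hMu : ∀ x ∈ K, |u x| ≤ M := fun x hx => (hM₁ x hx).trans (le_max_left _ _)
  have hMv : ∀ x ∈ K, |v x| ≤ M := fun x hx => (hM₂ x hx).trans (le_max_right _ _)
  have hM0 : 0 ≤ M := (abs_nonneg _).trans (hMu x₀ hx₀)
  have hucu := hK.uniformContinuousOn_of_continuous hu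
  have hucv := hK.uniformContinuousOn_of_continuous hv
  obtain ⟨s₁, hs₁, hsu⟩ := Metric.uniformContinuousOn_iff.1 hucu (m / 16) (by positivity)
  obtain ⟨s₂, hs₂, hsv⟩ := Metric.uniformContinuousOn_iff.1 hucv (m / 16) (by positivity)
  set s := min s₁ s₂ with hsdef
  have hs : 0 < s := lt_min hs₁ hs₂
  set Λ := (4 * M + 1) / (s / 4) ^ 2 with hΛdef
  have hΛ : 0 < Λ := by positivity
  have hΛs : Λ * (s / 4) ^ 2 = 4 * M + 1 := by rw [hΛdef]; field_simp
  set η := m / (8 * R ^ 2) with hη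
  have hηp : 0 < η := by positivity
  have hηR : η * R ^ 2 = m / 8 := by rw [hη]; field_simp
  set κ := m / (16 * R) with hκ
  have hκp : 0 < κ := by positivity
  have hκR : κ * R = m / 16 := by rw [hκ]; field_simp
  obtain ⟨U, Y, hY, hU1, hU2⟩ := supconv hK ⟨x₀, hx₀⟩ hu Λ
  obtain ⟨V, Z, hZ, hV1, hV2⟩ := supconv hK ⟨x₀, hx₀⟩ hv Λ
  have scU := supconv_sc hY hU1 hU2
  have scV := supconv_sc hZ hV1 hV2
  let V' : Euc n → ℝ := fun x => V x + η * ‖x‖ ^ 2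
  let qV : Euc n → Euc n := fun x => Λ • (Z x - x) + (2 * η) • x
  have scV' : SC Λ V' qV := by
    intro y z
    have h1 := scV y z
    simp only [V', qV, inner_add_left, real_inner_smul_left (x := y)]
    have e : ‖z‖ ^ 2 = ‖y‖ ^ 2 + 2 * ⟪y, z - y⟫ + ‖z - y‖ ^ 2 := by
      rw [← norm_add_sq_real, add_sub_cancel]
    rw [e]
    have : 0 ≤ η * ‖z - y‖ ^ 2 := by positivity
    nlinarith
  set B := 2 * Λ * R + 2 * η * R with hB
  have hB0 : 0 ≤ B := by positivity
  have bY : ∀ W : Euc n → Euc n, (∀ x, W x ∈ K) → ∀ x ∈ K, ‖Λ • (W x - x)‖ ≤ 2 * Λ * R := by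
    intro W hW x hx
    rw [norm_smul, Real.norm_eq_abs, abs_of_pos hΛ]
    have : ‖W x - x‖ ≤ 2 * R := (norm_sub_le _ _).trans (by linarith [hR x hx, hR _ (hW x)])
    calc _ ≤ Λ * (2 * R) := by gcongr
      _ = _ := by ring
  have bU : ∀ x ∈ K, ‖Λ • (Y x - x)‖ ≤ B := fun x hx => (bY Y hY x hx).trans (by
    rw [hB]; have : 0 ≤ 2 * η * R := by positivity
    linarith)
  have bV : ∀ x ∈ K, ‖qV x‖ ≤ B := by
    intro x hx
    refine (norm_add_le _ _).trans ?_
    rw [hB]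
    refine add_le_add (bY Z hZ x hx) ?_
    rw [norm_smul, Real.norm_eq_abs, abs_of_pos (by positivity)]
    gcongr; exact hR x hx
  have cU : ContinuousOn U K := sc_cont hΛ scU hB0 hRpos.le bU hR
  have cV : ContinuousOn V' K := sc_cont hΛ scV' hB0 hRpos.le bV hR
  have close : ∀ (f W : Euc n → ℝ) (T : Euc n → Euc n), (∀ x ∈ K, |f x| ≤ M) → (∀ x, T x ∈ K) →
      (∀ x, W x = f (T x) - Λ / 2 * ‖x - T x‖ ^ 2) →
      (∀ x, ∀ y ∈ K, f y - Λ / 2 * ‖x - y‖ ^ 2 ≤ W x) → ∀ x ∈ K, ‖x - T x‖ < s / 4 := by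
    intro f W T hf hT h1 h2 x hx
    have a := h2 x x hx
    rw [sub_self, norm_zero] at a
    have b := h1 x
    have c := abs_le.1 (hf x hx)
    have d := abs_le.1 (hf _ (hT x))
    by_contra hlt
    push Not at hlt
    have : Λ * (s / 4) ^ 2 ≤ Λ * ‖x - T x‖ ^ 2 := by gcongr
    nlinarith
  have clU := close u U Y hMu hY hU1 hU2
  have clV := close v V Z hMv hZ hV1 hV2
  let S : Set (Euc n) := {x | x ∈ Ω ∧ Y x ∈ Ω ∧ Z x ∈ Ω ∧
    ∃ p, ∀ z ∈ ball x (s / 2), U z + V' z ≤ U x + V' x + ⟪p, z - x⟫}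
  have hsur : ∀ p ∈ ball (0 : Euc n) κ, ∃ x ∈ S, ∀ z ∈ ball x (s / 2),
      U z + V' z ≤ U x + V' x + ⟪p, z - x⟫ := by
    intro p hp
    rw [mem_ball_zero_iff] at hp
    have hpb : ∀ x ∈ K, |⟪p, x⟫| ≤ m / 16 := by
      intro x hx
      refine (abs_real_inner_le_norm p x).trans ?_
      rw [← hκR]
      have := hR x hx
      gcongr
    have hc : ContinuousOn (fun x => U x + V' x - ⟪p, x⟫) K := by
      refine (cU.add cV).sub ?_
      fun_prop
    obtain ⟨x, hx, hmax⟩ := hK.exists_isMaxOn ⟨x₀, hx₀⟩ hc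
    have hmax' : ∀ y ∈ K, U y + V' y - ⟪p, y⟫ ≤ U x + V' x - ⟪p, x⟫ := fun y hy => hmax hy
    have hball : ball x (s / 2) ⊆ Ω := by
      refine ball_subO hΩ (half_pos hs) hx fun b hbf hbb => ?_
      have hbK : b ∈ K := frontier_subset_closure hbf
      have a1 := hmax' x₀ hx₀
      have a2 := hU2 x₀ x₀ hx₀
      have a3 := hV2 x₀ x₀ hx₀
      rw [sub_self, norm_zero, zero_pow two_ne_zero, mul_zero, sub_zero] at a2 a3
      have a4 := abs_le.1 (hpb x hx)
      have a5 := abs_le.1 (hpb x₀ hx₀)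
      have hdb : dist x b < s / 2 := by rw [dist_comm]; exact hbb
      have d1 : dist (Y x) b < s := by
        have := dist_triangle (Y x) x b
        have h := clU x hx
        rw [← dist_eq_norm, dist_comm] at h
        linarith
      have d2 : dist (Z x) b < s := by
        have := dist_triangle (Z x) x b
        have h := clV x hx
        rw [← dist_eq_norm, dist_comm] at h
        linarith
      have b1 := hsu _ (hY x) b hbK (d1.trans_le (min_le_left _ _))
      have b2 := hsv _ (hZ x) b hbK (d2.trans_le (min_le_right _ _))
      rw [Real.dist_eq] at b1 b2
      have b3 := (abs_lt.1 b1).2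
      have b4 := (abs_lt.1 b2).2
      have b5 := hbd b hbf
      have b6 := hU1 x
      have b7 := hV1 x
      have b8 : 0 ≤ Λ / 2 * ‖x - Y x‖ ^ 2 := by positivity
      have b9 : 0 ≤ Λ / 2 * ‖x - Z x‖ ^ 2 := by positivity
      have b10 : η * ‖x‖ ^ 2 ≤ η * R ^ 2 := by have := hR x hx; gcongr
      have b11 : 0 ≤ η * ‖x₀‖ ^ 2 := by positivity
      simp only [V'] at a1
      linarith
    have hp' : ∀ z ∈ ball x (s / 2), U z + V' z ≤ U x + V' x + ⟪p, z - x⟫ := by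
      intro z hz
      have := hmax' z (subset_closure (hball hz))
      rw [inner_sub_right]; linarith
    refine ⟨x, ⟨hball (mem_ball_self (half_pos hs)), hball ?_, hball ?_, p, hp'⟩, hp'⟩
    · rw [mem_ball, dist_comm, dist_eq_norm]; linarith [clU x hx]
    · rw [mem_ball, dist_comm, dist_eq_norm]; linarith [clV x hx]
  obtain ⟨x, hxS, A, C, L₁, L₂, h1, h2, h3⟩ := jensen hΛ (half_pos hs) hκp scU scV'
    (S := S) (M := B) (fun x hx => hx.2.2.2) hsur
    (fun x hx => ⟨bU x (subset_closure hx.1), bV x (subset_closure hx.1)⟩)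
  have hA : A + (η / 2) • symOne n ∈ F := by
    refine supconv_touch hΩ hFu hU1 hU2 hxS.2.1 (L := L₁) ?_
    filter_upwards [h1 (η / 4) (by positivity)] with h hh
    rw [bilin_smul_one]; linarith
  have hC : C + (-(3 * η / 2)) • symOne n ∈ dirDual F := by
    refine supconv_touch hΩ hFv hV1 hV2 hxS.2.2.1 (L := L₂ - (2 * η) • innerSL ℝ x) ?_
    filter_upwards [h2 (η / 4) (by positivity)] with h hh
    have e3 : ‖x + h‖ ^ 2 = ‖x‖ ^ 2 + 2 * ⟪x, h⟫ + ‖h‖ ^ 2 := norm_add_sq_real x h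
    simp only [V', e3] at hh
    rw [bilin_smul_one]
    simp only [sub_apply, smul_apply, smul_eq_mul, innerSL_apply_apply]
    linarith
  refine hC ((mem_interior_iff' hF.add_psd _).2 ⟨η, hηp, mono_mem hF.add_psd hA fun h => ?_⟩)
  rw [bilin_smul_one, bilin_smul_one]
  have e : ((-(C + (-(3 * η / 2)) • symOne n) : SymMat n) : Matrix (Fin n) (Fin n) ℝ) =
    -((C + (-(3 * η / 2)) • symOne n : SymMat n) : Matrix (Fin n) (Fin n) ℝ) := rfl
  rw [e, bilin_neg_mat, bilin_smul_one]
  linarith [h3 h]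

theorem visc_touch {n : ℕ} {F : Set (SymMat n)} {X : Set (Euc n)} {f β : Euc n → ℝ}
    (hf : Visc F X f) {x : Euc n} (hx : x ∈ X) (he : f x = β x) (hle : ∀ᶠ y in 𝓝 x, f y ≤ β y)
    {A : SymMat n} {L : Euc n →L[ℝ] ℝ}
    (ht : ∀ᶠ h in 𝓝 (0 : Euc n), β (x + h) ≤ β x + L h + 1 / 2 * bilin A.1 h h) : A ∈ F := by
  refine hf x hx A L ?_
  filter_upwards [ht, (tendsto_add_zero x).eventually hle] with h h1 h2
  rw [he]; exact h2.trans h1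

theorem glue {n : ℕ} {F : Set (SymMat n)} {Ω : Set (Euc n)} {f g : Euc n → ℝ} {U : Set (Euc n)}
    (hU : IsOpen U) (hf : ContinuousOn f (closure Ω))
    (hfF : Visc F Ω f) (hg : ContinuousOn g (closure Ω ∩ U)) (hgF : Visc F (Ω ∩ U) g)
    (hb : ∀ x ∈ closure Ω, x ∉ U → ∀ᶠ y in 𝓝[closure Ω] x, y ∈ U → g y ≤ f y) :
    ∃ β : Euc n → ℝ, ContinuousOn β (closure Ω) ∧ Visc F Ω β ∧ (∀ y, f y ≤ β y) ∧
      (∀ y ∈ U, g y ≤ β y) ∧ ∀ y, β y = f y ∨ (y ∈ U ∧ β y = g y) := by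
  classical
  let β : Euc n → ℝ := fun y => if y ∈ U then max (f y) (g y) else f y
  have hβU : ∀ y ∈ U, β y = max (f y) (g y) := fun y hy => if_pos hy
  have hβn : ∀ y, y ∉ U → β y = f y := fun y hy => if_neg hy
  have h1 : ∀ y, f y ≤ β y := by
    intro y
    by_cases hy : y ∈ U
    · rw [hβU y hy]; exact le_max_left _ _
    · rw [hβn y hy]
  have h2 : ∀ y ∈ U, g y ≤ β y := fun y hy => by rw [hβU y hy]; exact le_max_right _ _
  have h3 : ∀ y, β y = f y ∨ (y ∈ U ∧ β y = g y) := by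
    intro y
    by_cases hy : y ∈ U
    · rw [hβU y hy]
      rcases max_choice (f y) (g y) with h | h
      · exact Or.inl h
      · exact Or.inr ⟨hy, h⟩
    · exact Or.inl (hβn y hy)
  refine ⟨β, ?_, ?_, h1, h2, h3⟩
  · intro x hx
    by_cases hxU : x ∈ U
    · have a : ContinuousWithinAt (fun y => max (f y) (g y)) (closure Ω) x := by
        have b : ContinuousWithinAt g (closure Ω) x := by
          have := hg x ⟨hx, hxU⟩
          rwa [continuousWithinAt_inter (hU.mem_nhds hxU)] at this
        exact (hf x hx).max b
      refine a.congr_of_eventuallyEq ?_ (hβU x hxU)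
      filter_upwards [mem_nhdsWithin_of_mem_nhds (hU.mem_nhds hxU)] with y hy using hβU y hy
    · refine (hf x hx).congr_of_eventuallyEq ?_ (hβn x hxU)
      filter_upwards [hb x hx hxU] with y hy
      by_cases hyU : y ∈ U
      · rw [hβU y hyU, max_eq_left (hy hyU)]
      · exact hβn y hyU
  · intro x hx A L ht
    rcases h3 x with h | ⟨hxU, h⟩
    · exact visc_touch hfF hx h.symm (Eventually.of_forall h1) ht
    · exact visc_touch hgF ⟨hx, hxU⟩ h.symm ((hU.eventually_mem hxU).mono h2) ht

theorem visc_shift {n : ℕ} {F : Set (SymMat n)} {X : Set (Euc n)} {v : Euc n → ℝ}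
    (hv : Visc F X v) (y : Euc n) (c : ℝ) : Visc F {x | x + y ∈ X} (fun x => v (x + y) + c) := by
  intro x hx A L ht
  refine hv (x + y) hx A L ?_
  filter_upwards [ht] with h hh
  have e : x + y + h = x + h + y := by abel
  rw [e]; linarith

theorem visc_mono {n : ℕ} {F : Set (SymMat n)} {X Y : Set (Euc n)} {v : Euc n → ℝ}
    (hv : Visc F X v) (h : Y ⊆ X) : Visc F Y v := fun x hx => hv x (h hx)

/-- the Perron family -/
def Fam {n : ℕ} (F : Set (SymMat n)) (Ω : Set (Euc n)) (φ : Euc n → ℝ) (v : Euc n → ℝ) : Prop :=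
  ContinuousOn v (closure Ω) ∧ Visc F Ω v ∧ ∀ b ∈ frontier Ω, v b ≤ φ b

theorem fam_max {n : ℕ} {F : Set (SymMat n)} {Ω : Set (Euc n)} {φ v w : Euc n → ℝ}
    (hv : Fam F Ω φ v) (hw : Fam F Ω φ w) : ∃ β, Fam F Ω φ β ∧ (∀ y, v y ≤ β y) ∧ ∀ y, w y ≤ β y := by
  obtain ⟨β, h1, h2, h3, h4, h5⟩ := glue isOpen_univ hv.1 hv.2.1 (hw.1.mono inter_subset_left)
    (visc_mono hw.2.1 inter_subset_left) (fun x _ h => absurd (mem_univ x) h)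
  refine ⟨β, ⟨h1, h2, fun b hb => ?_⟩, h3, fun y => h4 y (mem_univ y)⟩
  rcases h5 b with h | h
  · rw [h]; exact hv.2.2 b hb
  · rw [h.2]; exact hw.2.2 b hb

theorem lin1 {n : ℕ} (H : Euc n →L[ℝ] Euc n →L[ℝ] ℝ) (B : SymMat n) (ℓ : Euc n →L[ℝ] ℝ)
    (hℓ : ℓ ≠ 0) (h : ∀ v w, ℓ v = 0 → ℓ w = 0 → H v w = bilin B.1 v w) {ε : ℝ} (hε : 0 < ε) :
    ∃ k : ℝ, 0 ≤ k ∧ ∀ h, bilin B.1 h h - ε * ‖h‖ ^ 2 ≤ H h h + k * (ℓ h) ^ 2 := by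
  obtain ⟨e, he⟩ : ∃ e, ℓ e = 1 := by
    obtain ⟨v, hv⟩ : ∃ v, ℓ v ≠ 0 := by
      by_contra hcon
      push Not at hcon
      exact hℓ (ContinuousLinearMap.ext hcon)
    exact ⟨(ℓ v)⁻¹ • v, by rw [map_smul, smul_eq_mul, inv_mul_cancel₀ hv]⟩
  let b := bl B.1
  have hb : ∀ v w, ℓ v = 0 → ℓ w = 0 → H v w = b v w := fun v w h1 h2 => by
    rw [h v w h1 h2, bl_apply]
  set N := ‖H‖ + ‖b‖ with hN
  have hD : ∀ v w, |H v w - b v w| ≤ N * ‖v‖ * ‖w‖ := by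
    intro v w
    have h1 := H.le_opNorm₂ v w
    have h2 := b.le_opNorm₂ v w
    rw [Real.norm_eq_abs] at h1 h2
    have := abs_sub (H v w) (b v w)
    rw [hN]; linarith
  have hN0 : 0 ≤ N := by positivity
  set C := 2 * N * ‖e‖ + ‖ℓ‖ * N * ‖e‖ ^ 2 with hC
  have hC0 : 0 ≤ C := by positivity
  refine ⟨C ^ 2 / (4 * ε), by positivity, fun v => ?_⟩
  set c := ℓ v with hc
  set v' := v - c • e with hv'
  have hv'0 : ℓ v' = 0 := by rw [hv', map_sub, map_smul, he, smul_eq_mul, mul_one, ← hc, sub_self]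
  have h1 := hb v' v' hv'0 hv'0
  have e1 : H v v - b v v = c * ((H v e - b v e) + (H e v - b e v) - c * (H e e - b e e)) := by
    rw [hv'] at h1
    simp only [map_sub, map_smul, sub_apply, smul_apply, smul_eq_mul] at h1
    linear_combination h1
  have h2 : |H v v - b v v| ≤ |c| * (C * ‖v‖) := by
    rw [e1, abs_mul]
    gcongr
    have a1 := hD v e
    have a2 := hD e v
    have a3 := hD e e
    have a4 : |c| ≤ ‖ℓ‖ * ‖v‖ := ℓ.le_opNorm v
    calc _ ≤ |H v e - b v e| + |H e v - b e v| + |c| * |H e e - b e e| := by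
          rw [← abs_mul]
          exact (abs_sub _ _).trans (by gcongr; exact abs_add_le _ _)
      _ ≤ N * ‖v‖ * ‖e‖ + N * ‖e‖ * ‖v‖ + ‖ℓ‖ * ‖v‖ * (N * ‖e‖ * ‖e‖) := by gcongr
      _ = C * ‖v‖ := by rw [hC]; ring
  have h3 := (abs_le.1 h2).1
  have h4 : |c| * (C * ‖v‖) ≤ C ^ 2 / (4 * ε) * c ^ 2 + ε * ‖v‖ ^ 2 := by
    have : C ^ 2 / (4 * ε) * c ^ 2 + ε * ‖v‖ ^ 2 - |c| * (C * ‖v‖) =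
        (C * |c| - 2 * ε * ‖v‖) ^ 2 / (4 * ε) := by
      rw [← sq_abs c]; field_simp; ring
    have h5 : 0 ≤ (C * |c| - 2 * ε * ‖v‖) ^ 2 / (4 * ε) := by positivity
    linarith
  rw [← bl_apply]
  linarith

theorem hess_near {n : ℕ} {ρ : Euc n → ℝ} {x : Euc n} (hρ : ContDiffAt ℝ 2 ρ x) {ε : ℝ} (hε : 0 < ε) :
    ∀ᶠ y in 𝓝 x, ∀ h, fderiv ℝ (fderiv ℝ ρ) x h h - ε * ‖h‖ ^ 2 ≤ fderiv ℝ (fderiv ℝ ρ) y h h := by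
  have h1 : ContinuousAt (fderiv ℝ (fderiv ℝ ρ)) x :=
    ((hρ.fderiv_right (m := 1) (by norm_num)).fderiv_right (m := 0) (by norm_num)).continuousAt
  have h0 : ball (fderiv ℝ (fderiv ℝ ρ) x) ε ∈ 𝓝 (fderiv ℝ (fderiv ℝ ρ) x) := by
    have := Metric.ball_mem_nhds (fderiv ℝ (fderiv ℝ ρ) x) hε
    exact this
  have h2 : ∀ᶠ y in 𝓝 x, fderiv ℝ (fderiv ℝ ρ) y ∈ ball (fderiv ℝ (fderiv ℝ ρ) x) ε :=
    h1.eventually_mem h0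
  filter_upwards [h2] with y hy h
  have hy : ‖fderiv ℝ (fderiv ℝ ρ) y - fderiv ℝ (fderiv ℝ ρ) x‖ < ε := by
    have e := dist_eq_norm (fderiv ℝ (fderiv ℝ ρ) y) (fderiv ℝ (fderiv ℝ ρ) x)
    have e2 := mem_ball.1 hy
    exact e.symm.trans_lt e2
  have h3 := (fderiv ℝ (fderiv ℝ ρ) y - fderiv ℝ (fderiv ℝ ρ) x).le_opNorm₂ h h
  rw [Real.norm_eq_abs] at h3
  have h4 := (abs_le.1 h3).1
  have h5 : ‖fderiv ℝ (fderiv ℝ ρ) y - fderiv ℝ (fderiv ℝ ρ) x‖ * ‖h‖ * ‖h‖ ≤ ε * ‖h‖ * ‖h‖ := by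
    gcongr
  simp only [sub_apply] at h4
  nlinarith

set_option maxHeartbeats 1000000 in
theorem local_barrier {n : ℕ} {F : Set (SymMat n)} (hF : IsDirichletSet F) {Ω : Set (Euc n)}
    (hΩ : IsOpen Ω) {x₀ : Euc n} (hx₀ : x₀ ∈ frontier Ω)
    (hc : StrictlyConvexAt (raySet F) Ω x₀) :
    ∃ r > 0, ∃ e > 0, ∃ ψ : Euc n → ℝ, ∃ t₀ : ℝ, ContinuousOn ψ (ball x₀ r) ∧ ψ x₀ = 0 ∧
      (∀ x ∈ closure Ω, x ∈ ball x₀ r → ψ x ≤ -e * ‖x - x₀‖ ^ 2) ∧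
      ∀ t, 0 < t → t₀ ≤ t → ∀ c : ℝ, Visc F (ball x₀ r) (fun x => c + t * ψ x) := by
  obtain ⟨U, ρ, hxU, ⟨hUo, hρ, hΩU, hρ0⟩, B, hB, hBt⟩ := hc
  obtain ⟨A, δ, hδ, t₀, hA, hAB⟩ := ray_lemma hB
  have hρ2 : ∀ y ∈ U, ContDiffAt ℝ 2 ρ y := fun y hy =>
    (hρ.contDiffAt (hUo.mem_nhds hy)).of_le (WithTop.coe_le_coe.2 le_top)
  have hρc : ∀ y ∈ U, ContinuousAt ρ y := fun y hy => (hρ2 y hy).continuousAt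
  have hρle : ∀ x ∈ closure Ω, x ∈ U → ρ x ≤ 0 := by
    intro x hx hxU
    by_contra hpos
    push Not at hpos
    have h1 : ∀ᶠ y in 𝓝 x, 0 < ρ y ∧ y ∈ U :=
      ((hρc x hxU).eventually (lt_mem_nhds hpos)).and (hUo.mem_nhds hxU)
    obtain ⟨y, hy, hyΩ⟩ := mem_closure_iff_nhds.1 hx _ h1
    have : y ∈ {y ∈ U | ρ y < 0} := by rw [← hΩU]; exact ⟨hyΩ, hy.2⟩
    exact lt_asymm this.2 hy.1
  have hρx : ρ x₀ = 0 := by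
    refine le_antisymm (hρle x₀ (frontier_subset_closure hx₀) hxU) ?_
    by_contra hneg
    push Not at hneg
    have : x₀ ∈ Ω ∩ U := by rw [hΩU]; exact ⟨hxU, hneg⟩
    rw [frontier, hΩ.interior_eq] at hx₀
    exact hx₀.2 this.1
  set ℓ := fderiv ℝ ρ x₀ with hℓ
  set ε := δ / 4 with hε
  have hεp : 0 < ε := by positivity
  obtain ⟨k, hk, hlin⟩ := lin1 (fderiv ℝ (fderiv ℝ ρ) x₀) B ℓ (hρ0 x₀ hxU) (fun v w h1 h2 => by
    rw [← bilin_hess]; exact hBt v w h1 h2) hεp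
  let ψ : Euc n → ℝ := fun x => ρ x + k / 2 * (ℓ (x - x₀)) ^ 2 - ε * ‖x - x₀‖ ^ 2
  set σ := min 1 (ε / (2 * (k + 1))) with hσ
  have hσp : 0 < σ := lt_min one_pos (by positivity)
  have hσk : k * σ ^ 2 ≤ ε / 2 := by
    have h1 : σ ≤ 1 := min_le_left _ _
    have h2 : σ ≤ ε / (2 * (k + 1)) := min_le_right _ _
    rw [le_div_iff₀ (by positivity)] at h2
    have h3 : k * σ ^ 2 ≤ k * σ := by
      rw [pow_two]; gcongr; nlinarith
    nlinarith
  have ev1 : ∀ᶠ x in 𝓝 x₀, |ρ x - ρ x₀ - ℓ (x - x₀)| ≤ σ * ‖x - x₀‖ :=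
    (hasFDerivAt_iff_isLittleO.1
      ((hρ2 x₀ hxU).differentiableAt (by norm_num)).hasFDerivAt).def hσp
  have ev2 : ∀ᶠ x in 𝓝 x₀, -1 < k * ρ x := by
    have : ContinuousAt (fun x => k * ρ x) x₀ := continuousAt_const.mul (hρc x₀ hxU)
    refine this.eventually (lt_mem_nhds ?_)
    show -1 < k * ρ x₀
    rw [hρx]; norm_num
  have ev3 := hess_near (hρ2 x₀ hxU) hεp
  obtain ⟨r, hr, hball⟩ := Metric.eventually_nhds_iff_ball.1
    (ev1.and (ev2.and (ev3.and (hUo.eventually_mem hxU))))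
  refine ⟨r, hr, ε / 2, half_pos hεp, ψ, t₀, ?_, ?_, ?_, ?_⟩
  · intro x hx
    have h1 := (hρc x (hball x hx).2.2.2).continuousWithinAt (s := ball x₀ r)
    refine (h1.add ?_).sub ?_
    · exact (by fun_prop : Continuous fun x => k / 2 * (ℓ (x - x₀)) ^ 2).continuousWithinAt
    · exact (by fun_prop : Continuous fun x => ε * ‖x - x₀‖ ^ 2).continuousWithinAt
  · simp [ψ, hρx]
  · intro x hx hxb
    obtain ⟨h1, h2, -, h4⟩ := hball x hxb
    have h5 := hρle x hx h4
    rw [hρx, sub_zero] at h1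
    have h6 : (ℓ (x - x₀)) ^ 2 ≤ 2 * ρ x ^ 2 + 2 * (σ * ‖x - x₀‖) ^ 2 := by
      have h7 : (ρ x - ℓ (x - x₀)) ^ 2 ≤ (σ * ‖x - x₀‖) ^ 2 := by
        rw [← sq_abs (ρ x - ℓ (x - x₀))]; gcongr
      nlinarith [sq_nonneg (2 * ρ x - ℓ (x - x₀))]
    have h8 : k / 2 * (ℓ (x - x₀)) ^ 2 ≤ k / 2 * (2 * ρ x ^ 2 + 2 * (σ * ‖x - x₀‖) ^ 2) := by gcongr
    have h9 : ρ x + k * ρ x ^ 2 ≤ 0 := by nlinarith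
    have h10 : k * σ ^ 2 * ‖x - x₀‖ ^ 2 ≤ ε / 2 * ‖x - x₀‖ ^ 2 := by gcongr
    simp only [ψ]
    nlinarith
  · intro t ht htt c
    refine visc_of_lower hF fun x hx => ⟨t • (fderiv ℝ ρ x + (k * ℓ (x - x₀)) • ℓ
      - (2 * ε) • innerSL ℝ (x - x₀)), t • A, hA t htt, fun θ hθ => ?_⟩
    obtain ⟨-, -, h3, h4⟩ := hball x hx
    filter_upwards [taylor2 (hρ2 x h4) (show 0 < θ / t by positivity)] with h hh
    have a1 := (abs_le.1 hh).1
    have a2 := h3 h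
    have a3 := hlin h
    have a4 := hAB h
    have e1 : ((t • A : SymMat n) : Matrix (Fin n) (Fin n) ℝ) = t • A.1 := rfl
    have e2 : x + h - x₀ = (x - x₀) + h := by abel
    have e3 : ‖(x - x₀) + h‖ ^ 2 = ‖x - x₀‖ ^ 2 + 2 * ⟪x - x₀, h⟫ + ‖h‖ ^ 2 := norm_add_sq_real _ h
    rw [e1, bilin_smul_mat]
    simp only [ψ, e2, e3, map_add, smul_apply, sub_apply, add_apply, smul_eq_mul, innerSL_apply_apply]
    have key : ρ x + fderiv ℝ ρ x h + 1 / 2 * bilin A.1 h h - θ / t * ‖h‖ ^ 2 + ε * ‖h‖ ^ 2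
        - k / 2 * (ℓ h) ^ 2 ≤ ρ (x + h) := by
      have : δ * ‖h‖ ^ 2 = 4 * (ε * ‖h‖ ^ 2) := by rw [hε]; ring
      linarith
    have key2 := mul_le_mul_of_nonneg_left key ht.le
    have e4 : t * (θ / t * ‖h‖ ^ 2) = θ * ‖h‖ ^ 2 := by field_simp
    nlinarith

theorem fam_nonempty {n : ℕ} {F : Set (SymMat n)} (hF : IsDirichletSet F) {Ω : Set (Euc n)}
    (hb : Bornology.IsBounded Ω) {φ : Euc n → ℝ} (hφ : ContinuousOn φ (frontier Ω)) :
    ∃ f, Fam F Ω φ f := by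
  have hK : IsCompact (closure Ω) := hb.isCompact_closure
  have hfr : IsCompact (frontier Ω) := hK.of_isClosed_subset isClosed_frontier frontier_subset_closure
  obtain ⟨A, hA⟩ := hF.nonempty
  obtain ⟨Cφ, hCφ⟩ := hfr.exists_bound_of_continuousOn hφ
  have hqc : Continuous fun y : Euc n => 1 / 2 * bilin A.1 y y := (contDiff_quad A _).continuous
  obtain ⟨C, hC⟩ := hK.exists_bound_of_continuousOn hqc.continuousOn
  refine ⟨fun y => 1 / 2 * bilin A.1 y y + (-(C + Cφ)), ?_, visc_quad hF Ω hA _, fun b hb => ?_⟩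
  · exact (hqc.add continuous_const).continuousOn
  · have h1 := (abs_le.1 (hC b (frontier_subset_closure hb))).2
    have h2 := (abs_le.1 (hCφ b hb)).1
    linarith

theorem barrier {n : ℕ} {F : Set (SymMat n)} (hF : IsDirichletSet F) {Ω : Set (Euc n)}
    (hΩ : IsOpen Ω) (hb : Bornology.IsBounded Ω) {φ : Euc n → ℝ} (hφ : ContinuousOn φ (frontier Ω))
    {x₀ : Euc n} (hx₀ : x₀ ∈ frontier Ω) (hc : StrictlyConvexAt (raySet F) Ω x₀)
    {ε : ℝ} (hε : 0 < ε) : ∃ β, Fam F Ω φ β ∧ φ x₀ - ε ≤ β x₀ := by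
  have hK : IsCompact (closure Ω) := hb.isCompact_closure
  obtain ⟨f, hf⟩ := fam_nonempty hF hb hφ
  obtain ⟨r, hr, e, he, ψ, t₀, hψc, hψ0, hψ, hψF⟩ := local_barrier hF hΩ hx₀ hc
  obtain ⟨r', hr', hφr⟩ := Metric.continuousWithinAt_iff.1 (hφ x₀ hx₀) ε hε
  obtain ⟨C, hC⟩ := hK.exists_bound_of_continuousOn hf.1
  set R := min r r' with hR
  have hRp : 0 < R := lt_min hr hr'
  have hRr : ball x₀ R ⊆ ball x₀ r := ball_subset_ball (min_le_left _ _)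
  set t := max (max t₀ 1) ((|φ x₀| + C) / (e * (R / 2) ^ 2)) with ht
  have ht0 : t₀ ≤ t := (le_max_left _ _).trans (le_max_left _ _)
  have ht1 : 0 < t := lt_of_lt_of_le one_pos ((le_max_right _ _).trans (le_max_left _ _))
  have ht2 : |φ x₀| + C ≤ t * (e * (R / 2) ^ 2) := by
    have : (|φ x₀| + C) / (e * (R / 2) ^ 2) ≤ t := le_max_right _ _
    rwa [div_le_iff₀ (by positivity)] at this
  have hgle : ∀ x ∈ closure Ω, x ∈ ball x₀ R → φ x₀ - ε + t * ψ x ≤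
      φ x₀ - ε - t * (e * ‖x - x₀‖ ^ 2) := by
    intro x hx hxb
    have := mul_le_mul_of_nonneg_left (hψ x hx (hRr hxb)) ht1.le
    linarith
  obtain ⟨β, h1, h2, h3, h4, h5⟩ := glue (U := ball x₀ R) (g := fun x => φ x₀ - ε + t * ψ x)
    isOpen_ball hf.1 hf.2.1
    ((continuousOn_const.add (continuousOn_const.mul hψc)).mono (inter_subset_right.trans hRr))
    (visc_mono (hψF t ht1 ht0 _) (inter_subset_right.trans hRr)) (by
      intro x hx hxb
      have hd : R / 2 < dist x x₀ := by
        have : R ≤ dist x x₀ := by simpa using hxb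
        linarith
      have hev : ∀ᶠ y in 𝓝 x, R / 2 < dist y x₀ :=
        (continuous_id.dist continuous_const).continuousAt.eventually (lt_mem_nhds hd)
      filter_upwards [mem_nhdsWithin_of_mem_nhds hev, self_mem_nhdsWithin] with y hy hyK hyb
      have a1 := hgle y hyK hyb
      have a2 := (abs_le.1 (hC y hyK)).1
      have a3 := le_abs_self (φ x₀)
      rw [dist_eq_norm] at hy
      have a4 : t * (e * (R / 2) ^ 2) ≤ t * (e * ‖y - x₀‖ ^ 2) := by gcongr
      show φ x₀ - ε + t * ψ y ≤ f y
      linarith)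
  refine ⟨β, ⟨h1, h2, fun b hb => ?_⟩, ?_⟩
  · rcases h5 b with h | ⟨hbb, h⟩
    · rw [h]; exact hf.2.2 b hb
    · rw [h]
      have a1 := hgle b (frontier_subset_closure hb) hbb
      have a2 := hφr hb (lt_of_lt_of_le hbb (min_le_right _ _))
      rw [Real.dist_eq] at a2
      have a3 := (abs_lt.1 a2).1
      have a4 : 0 ≤ t * (e * ‖b - x₀‖ ^ 2) := by positivity
      linarith
  · have := h4 x₀ (mem_ball_self hRp)
    simp only [hψ0, mul_zero, add_zero] at this
    exact this

theorem unif_barrier {n : ℕ} {F : Set (SymMat n)} (hF : IsDirichletSet F) {Ω : Set (Euc n)}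
    (hΩ : IsOpen Ω) (hb : Bornology.IsBounded Ω) {φ : Euc n → ℝ} (hφ : ContinuousOn φ (frontier Ω))
    (hc : ∀ x ∈ frontier Ω, StrictlyConvexAt (raySet F) Ω x)
    {ε : ℝ} (hε : 0 < ε) : ∃ δ > 0, ∃ L, Fam F Ω φ L ∧ ∀ b ∈ frontier Ω, ∀ x ∈ closure Ω,
      dist x b < δ → φ b - ε ≤ L x := by
  have hK : IsCompact (closure Ω) := hb.isCompact_closure
  have hfr : IsCompact (frontier Ω) := hK.of_isClosed_subset isClosed_frontier frontier_subset_closure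
  refine (hfr.induction_on (p := fun s => ∃ δ > 0, ∃ L, Fam F Ω φ L ∧ ∀ b ∈ frontier Ω, b ∈ s →
    ∀ x ∈ closure Ω, dist x b < δ → φ b - ε ≤ L x) ?_ ?_ ?_ ?_).imp ?_
  · obtain ⟨f, hf⟩ := fam_nonempty hF hb hφ
    exact ⟨1, one_pos, f, hf, fun b _ h => absurd h (notMem_empty b)⟩
  · rintro s t hst ⟨δ, hδ, L, hL, h⟩
    exact ⟨δ, hδ, L, hL, fun b hb hbs => h b hb (hst hbs)⟩
  · rintro s t ⟨δ, hδ, L, hL, h⟩ ⟨δ', hδ', L', hL', h'⟩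
    obtain ⟨β, hβ, h1, h2⟩ := fam_max hL hL'
    refine ⟨min δ δ', lt_min hδ hδ', β, hβ, fun b hb hbs x hx hd => ?_⟩
    rcases hbs with hbs | hbs
    · exact (h b hb hbs x hx (hd.trans_le (min_le_left _ _))).trans (h1 x)
    · exact (h' b hb hbs x hx (hd.trans_le (min_le_right _ _))).trans (h2 x)
  · intro x₀ hx₀
    obtain ⟨β, hβ, hβx⟩ := barrier hF hΩ hb hφ hx₀ (hc x₀ hx₀) (show 0 < ε / 3 by positivity)
    obtain ⟨r, hr, hφr⟩ := Metric.continuousWithinAt_iff.1 (hφ x₀ hx₀) (ε / 3) (by positivity)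
    obtain ⟨r', hr', hβr⟩ := Metric.continuousWithinAt_iff.1
      (hβ.1 x₀ (frontier_subset_closure hx₀)) (ε / 3) (by positivity)
    set δ := min r r' / 2 with hδ
    have hδp : 0 < δ := half_pos (lt_min hr hr')
    refine ⟨ball x₀ δ, mem_nhdsWithin_of_mem_nhds (ball_mem_nhds _ hδp), δ, hδp, β, hβ, ?_⟩
    intro b hb hbs x hx hd
    have h1 : min r r' ≤ r := min_le_left _ _
    have h2 : min r r' ≤ r' := min_le_right _ _
    have hbs' : dist b x₀ < δ := hbs
    have h3 := dist_triangle x b x₀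
    have a := hφr hb (by linarith)
    have b := hβr hx (by linarith)
    rw [Real.dist_eq] at a b
    have a1 := (abs_lt.1 a).2
    have b1 := (abs_lt.1 b).1
    linarith
  · rintro δ ⟨hδ, L, hL, h⟩
    exact ⟨hδ, L, hL, fun b hb => h b hb hb⟩

theorem fam_upper {n : ℕ} {F : Set (SymMat n)} (hF : IsDirichletSet F) {Ω : Set (Euc n)}
    (hΩ : IsOpen Ω) (hb : Bornology.IsBounded Ω) {φ : Euc n → ℝ} (hφ : ContinuousOn φ (frontier Ω))
    (hc : ∀ x ∈ frontier Ω, StrictlyConvexAt (raySet (dirDual F)) Ω x)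
    {ε : ℝ} (hε : 0 < ε) : ∃ δ > 0, ∃ C, ∀ v, Fam F Ω φ v → (∀ x ∈ closure Ω, v x ≤ C) ∧
      ∀ b ∈ frontier Ω, ∀ x ∈ closure Ω, dist x b < δ → v x ≤ φ b + ε := by
  obtain ⟨δ, hδ, M, hM, h⟩ := unif_barrier (dirDual_dirichlet hF) hΩ hb hφ.neg hc hε
  obtain ⟨C, hC⟩ := hb.isCompact_closure.exists_bound_of_continuousOn hM.1
  refine ⟨δ, hδ, C, fun v hv => ?_⟩
  have key := comparison hF hΩ hb hv.1 hM.1 hv.2.1 hM.2.1 (fun x hx => by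
    have h1 := hv.2.2 x hx
    have h2 : M x ≤ - φ x := hM.2.2 x hx
    linarith)
  refine ⟨fun x hx => ?_, fun b hb x hx hd => ?_⟩
  · have h1 := key x hx
    have h2 := (abs_le.1 (hC x hx)).1
    linarith
  · have h1 := key x hx
    have h2 : - φ b - ε ≤ M x := h b hb x hx hd
    linarith

theorem walsh {n : ℕ} {F : Set (SymMat n)} (hF : IsDirichletSet F) {Ω : Set (Euc n)}
    (hΩ : IsOpen Ω) (hb : Bornology.IsBounded Ω) {φ : Euc n → ℝ} (hφ : ContinuousOn φ (frontier Ω))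
    (hc : ∀ x ∈ frontier Ω, StrictlyConvexAt (raySet F) Ω x)
    (hc' : ∀ x ∈ frontier Ω, StrictlyConvexAt (raySet (dirDual F)) Ω x)
    {ε : ℝ} (hε : 0 < ε) : ∃ δ > 0, ∀ v, Fam F Ω φ v → ∀ x ∈ closure Ω, ∀ x' ∈ closure Ω,
      dist x' x < δ → ∃ β, Fam F Ω φ β ∧ v x' - 3 * ε ≤ β x := by
  obtain ⟨δ₁, hδ₁, C, hup⟩ := fam_upper hF hΩ hb hφ hc' hε
  obtain ⟨δ₂, hδ₂, M, hM, hlow⟩ := unif_barrier hF hΩ hb hφ hc hε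
  refine ⟨min δ₁ δ₂, lt_min hδ₁ hδ₂, fun v hv x hx x' hx' hd => ?_⟩
  have hd1 := hd.trans_le (min_le_left _ _)
  have hd2 := hd.trans_le (min_le_right _ _)
  have hfrm : ∀ z ∈ closure Ω, z ∉ Ω → z ∈ frontier Ω := fun z h1 h2 => by
    rw [frontier, hΩ.interior_eq]; exact ⟨h1, h2⟩
  by_cases hxΩ : x' ∈ Ω
  swap
  · have hb' := hfrm x' hx' hxΩ
    refine ⟨M, hM, ?_⟩
    have h1 := hlow x' hb' x hx (by rw [dist_comm]; exact hd2)
    have h2 := hv.2.2 x' hb'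
    linarith
  obtain ⟨f, hf, hvf, hMf⟩ := fam_max hv hM
  set y := x' - x with hy
  have hyn : ∀ z : Euc n, dist (z + y) z < min δ₁ δ₂ := fun z => by
    rw [dist_eq_norm, add_sub_cancel_left, hy, ← dist_eq_norm]; exact hd
  have hcont : Continuous fun z : Euc n => z + y := continuous_id.add continuous_const
  obtain ⟨β, h1, h2, h3, h4, h5⟩ := glue (U := {z | z + y ∈ Ω})
    (g := fun z => v (z + y) + (-(3 * ε))) (hΩ.preimage hcont) hf.1 hf.2.1
    (by
      refine ContinuousOn.add ?_ continuousOn_const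
      exact hv.1.comp hcont.continuousOn (fun z hz => subset_closure hz.2))
    (visc_mono (visc_shift hv.2.1 y _) inter_subset_right)
    (by
      intro z hz hzU
      by_cases hzc : z + y ∈ closure Ω
      · have hbz := hfrm _ hzc hzU
        have a1 := hlow _ hbz z hz (by
          rw [dist_comm]; exact (hyn z).trans_le (min_le_right _ _))
        have a2 := hv.2.2 _ hbz
        have a3 := hMf z
        have e1 : ∀ᶠ w in 𝓝[closure Ω] z, f z - ε < f w :=
          (hf.1 z hz).eventually (lt_mem_nhds (by linarith))
        have e2 : ∀ᶠ w in 𝓝[closure Ω] (z + y), v w < v (z + y) + ε :=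
          (hv.1 _ hzc).eventually (gt_mem_nhds (by linarith))
        rw [eventually_nhdsWithin_iff] at e2
        have e3 := hcont.continuousAt.eventually e2
        filter_upwards [e1, mem_nhdsWithin_of_mem_nhds e3] with w b1 b2 b3
        have b4 := b2 (subset_closure b3)
        show v (w + y) + (-(3 * ε)) ≤ f w
        linarith
      · have e3 : ∀ᶠ w in 𝓝 z, w + y ∈ (closure Ω)ᶜ :=
          hcont.continuousAt.eventually (isClosed_closure.isOpen_compl.mem_nhds hzc)
        filter_upwards [mem_nhdsWithin_of_mem_nhds e3] with w b1 b2
        exact absurd (subset_closure b2) b1)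
  refine ⟨β, ⟨h1, h2, fun b hb => ?_⟩, ?_⟩
  · rcases h5 b with h | ⟨hbU, h⟩
    · rw [h]; exact hf.2.2 b hb
    · rw [h]
      have := (hup v hv).2 b hb (b + y) (subset_closure hbU) ((hyn b).trans_le (min_le_left _ _))
      show v (b + y) + (-(3 * ε)) ≤ φ b
      linarith
  · have e : x + y = x' := by rw [hy]; abel
    have := h4 x (show x + y ∈ Ω by rw [e]; exact hxΩ)
    rw [e] at this
    linarith

theorem visc_sup {n : ℕ} {F : Set (SymMat n)} (hF : IsDirichletSet F) {Ω : Set (Euc n)}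
    (hΩ : IsOpen Ω) {φ u : Euc n → ℝ} (hle : ∀ v, Fam F Ω φ v → ∀ x ∈ closure Ω, v x ≤ u x)
    (hap : ∀ x ∈ closure Ω, ∀ η > 0, ∃ v, Fam F Ω φ v ∧ u x - η < v x) : Visc F Ω u := by
  intro x hx A L ht
  refine mem_of_forall_add hF.isClosed A fun ε hε => ?_
  have ev : ∀ᶠ h in 𝓝 (0 : Euc n), x + h ∈ Ω := (tendsto_add_zero x).eventually (hΩ.mem_nhds hx)
  obtain ⟨r, hr, hball⟩ := Metric.nhds_basis_closedBall.eventually_iff.1 (ht.and ev)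
  obtain ⟨v, hv, hvx⟩ := hap x (subset_closure hx) (1 / 2 * ε * r ^ 2) (by positivity)
  set B := A + ε • symOne n with hB
  have hBq : ∀ h : Euc n, bilin B.1 h h = bilin A.1 h h + ε * ‖h‖ ^ 2 := bilin_smul_one A ε
  have hqc : Continuous fun h : Euc n => 1 / 2 * bilin B.1 h h := (contDiff_quad B _).continuous
  obtain ⟨h₀, hh₀, hmax⟩ := (isCompact_closedBall (0 : Euc n) r).exists_isMaxOn
    ⟨0, mem_closedBall_self hr.le⟩
    (f := fun h => v (x + h) - L h - 1 / 2 * bilin B.1 h h) (by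
      refine ContinuousOn.sub (ContinuousOn.sub ?_ L.continuous.continuousOn) hqc.continuousOn
      exact hv.1.comp (continuous_const.add continuous_id).continuousOn
        (fun h hh => subset_closure (hball hh).2))
  have a0 := hmax (mem_closedBall_self hr.le)
  have z : bilin B.1 (0 : Euc n) 0 = 0 := by simp [bilin]
  have a1 : v x ≤ v (x + h₀) - L h₀ - 1 / 2 * bilin B.1 h₀ h₀ := by
    have : v (x + 0) - L 0 - 1 / 2 * bilin B.1 (0 : Euc n) 0 ≤
      v (x + h₀) - L h₀ - 1 / 2 * bilin B.1 h₀ h₀ := a0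
    rw [z, map_zero, add_zero] at this
    linarith
  have a2 := hball hh₀
  have a3 := hle v hv _ (subset_closure a2.2)
  have a4 := hBq h₀
  have a5 : ‖h₀‖ < r := by
    have : ‖h₀‖ ^ 2 < r ^ 2 := by nlinarith [a2.1]
    exact lt_of_pow_lt_pow_left₀ 2 hr.le this
  refine hv.2.1 (x + h₀) a2.2 B (L + (2 * (1 / 2 : ℝ)) • bl B.1 h₀) ?_
  have ev2 : ∀ᶠ k in 𝓝 (0 : Euc n), h₀ + k ∈ ball (0 : Euc n) r :=
    (tendsto_add_zero h₀).eventually (isOpen_ball.mem_nhds (by simpa using a5))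
  filter_upwards [ev2] with k hk
  have c1 : v (x + (h₀ + k)) - L (h₀ + k) - 1 / 2 * bilin B.1 (h₀ + k) (h₀ + k) ≤
      v (x + h₀) - L h₀ - 1 / 2 * bilin B.1 h₀ h₀ := hmax (ball_subset_closedBall hk)
  rw [quad_add, map_add, ← add_assoc] at c1
  rw [add_apply]
  linarith

theorem visc_bump {n : ℕ} {F : Set (SymMat n)} (hF : IsDirichletSet F) {Ω : Set (Euc n)}
    (hΩ : IsOpen Ω) {φ u : Euc n → ℝ} (hle : ∀ v, Fam F Ω φ v → ∀ x ∈ closure Ω, v x ≤ u x)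
    (hu : Fam F Ω φ u) : Visc (dirDual F) Ω (fun x => - u x) := by
  intro x hx A L ht
  by_contra hA
  have hA' : -A ∈ interior F := by
    by_contra h; exact hA h
  obtain ⟨δ, hδ, hB⟩ := (mem_interior_iff' hF.add_psd _).1 hA'
  set B := -A + (-δ) • symOne n with hBd
  have hBq : ∀ h : Euc n, bilin B.1 h h = - bilin A.1 h h - δ * ‖h‖ ^ 2 := fun h => by
    have := bilin_smul_one (-A) (-δ) h
    rw [hBd, this]
    have e : ((-A : SymMat n) : Matrix (Fin n) (Fin n) ℝ) = - A.1 := rfl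
    rw [e, bilin_neg_mat]; ring
  have ev : ∀ᶠ h in 𝓝 (0 : Euc n), x + h ∈ Ω := (tendsto_add_zero x).eventually (hΩ.mem_nhds hx)
  obtain ⟨r, hr, hball⟩ := Metric.eventually_nhds_iff_ball.1 (ht.and ev)
  set s := δ * r ^ 2 / 8 with hs
  have hsp : 0 < s := by positivity
  have hb2 : ∀ y ∈ ball x r, - u y ≤ - u x + L (y - x) + 1 / 2 * bilin A.1 (y - x) (y - x) ∧ y ∈ Ω := by
    intro y hy
    have := hball (y - x) (by rw [mem_ball_zero_iff, ← dist_eq_norm]; exact hy)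
    rwa [add_sub_cancel] at this
  let g : Euc n → ℝ := fun y => u x + s - L (y - x) + 1 / 2 * bilin B.1 (y - x) (y - x)
  have hqc : Continuous fun h : Euc n => 1 / 2 * bilin B.1 h h := (contDiff_quad B _).continuous
  have hgc : Continuous g := by
    have h1 : Continuous fun y : Euc n => 1 / 2 * bilin B.1 (y - x) (y - x) :=
      hqc.comp (continuous_id.sub continuous_const)
    have h2 : Continuous fun y : Euc n => u x + s - L (y - x) := by fun_prop
    exact h2.add h1
  have hgF : Visc F (Ω ∩ ball x r) g := by
    refine visc_of_lower hF fun y _ => ⟨-L + (2 * (1 / 2 : ℝ)) • bl B.1 (y - x), B, hB,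
      fun θ hθ => Eventually.of_forall fun h => ?_⟩
    have e : y + h - x = (y - x) + h := by abel
    simp only [g, e]
    rw [quad_add, map_add, add_apply, neg_apply]
    have : 0 ≤ θ * ‖h‖ ^ 2 := by positivity
    linarith
  obtain ⟨β, h1, h2, h3, h4, h5⟩ := glue (U := ball x r) (g := g) isOpen_ball hu.1 hu.2.1
    hgc.continuousOn hgF (by
      intro z hz hzb
      have hd : r / 2 < dist z x := by
        have : r ≤ dist z x := by simpa using hzb
        linarith
      have hev : ∀ᶠ y in 𝓝 z, r / 2 < dist y x :=
        (continuous_id.dist continuous_const).continuousAt.eventually (lt_mem_nhds hd)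
      filter_upwards [mem_nhdsWithin_of_mem_nhds hev] with y hy hyb
      have a1 := (hb2 y hyb).1
      have a2 := hBq (y - x)
      have a3 : δ * (r / 2) ^ 2 ≤ δ * ‖y - x‖ ^ 2 := by
        rw [← dist_eq_norm]; gcongr
      show u x + s - L (y - x) + 1 / 2 * bilin B.1 (y - x) (y - x) ≤ u y
      rw [a2, hs]
      nlinarith)
  have hβ : Fam F Ω φ β := by
    refine ⟨h1, h2, fun b hb => ?_⟩
    rcases h5 b with h | ⟨hbU, h⟩
    · rw [h]; exact hu.2.2 b hb
    · rw [frontier, hΩ.interior_eq] at hb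
      exact absurd (hb2 b hbU).2 hb.2
  have c1 := hle β hβ x (subset_closure hx)
  have c2 : u x + s - L (x - x) + 1 / 2 * bilin B.1 (x - x) (x - x) ≤ β x := h4 x (mem_ball_self hr)
  have z : bilin B.1 (0 : Euc n) 0 = 0 := by simp [bilin]
  rw [sub_self, map_zero, z] at c2
  linarith

theorem perron {n : ℕ} {F : Set (SymMat n)} (hF : IsDirichletSet F) {Ω : Set (Euc n)}
    (hΩ : IsOpen Ω) (hb : Bornology.IsBounded Ω) {φ : Euc n → ℝ} (hφ : ContinuousOn φ (frontier Ω))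
    (hc : ∀ x ∈ frontier Ω, StrictlyConvexAt (raySet F) Ω x)
    (hc' : ∀ x ∈ frontier Ω, StrictlyConvexAt (raySet (dirDual F)) Ω x) :
    ∃ u : Euc n → ℝ, ContinuousOn u (closure Ω) ∧ (∀ x ∈ frontier Ω, u x = φ x) ∧
      Visc F Ω u ∧ Visc (dirDual F) Ω (fun x => - u x) := by
  obtain ⟨f₀, hf₀⟩ := fam_nonempty hF hb hφ
  obtain ⟨δ₀, hδ₀, C, hup⟩ := fam_upper hF hΩ hb hφ hc' one_pos
  let S : Euc n → Set ℝ := fun x => {s | ∃ v, Fam F Ω φ v ∧ v x = s}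
  let u : Euc n → ℝ := fun x => sSup (S x)
  have hne : ∀ x, (S x).Nonempty := fun x => ⟨_, f₀, hf₀, rfl⟩
  have hbd : ∀ x ∈ closure Ω, BddAbove (S x) := fun x hx => ⟨C, by
    rintro _ ⟨v, hv, rfl⟩; exact (hup v hv).1 x hx⟩
  have hle : ∀ v, Fam F Ω φ v → ∀ x ∈ closure Ω, v x ≤ u x := fun v hv x hx =>
    le_csSup (hbd x hx) ⟨v, hv, rfl⟩
  have hap : ∀ x ∈ closure Ω, ∀ η > 0, ∃ v, Fam F Ω φ v ∧ u x - η < v x := by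
    intro x hx η hη
    obtain ⟨_, ⟨v, hv, rfl⟩, h⟩ := exists_lt_of_lt_csSup (hne x) (show u x - η < sSup (S x) from
      sub_lt_self _ hη)
    exact ⟨v, hv, h⟩
  have hbv : ∀ x ∈ frontier Ω, u x = φ x := by
    intro x hx
    refine le_antisymm (csSup_le (hne x) ?_) ?_
    · rintro _ ⟨v, hv, rfl⟩; exact hv.2.2 x hx
    · refine le_of_forall_pos_le_add fun ε hε => ?_
      obtain ⟨β, hβ, h⟩ := barrier hF hΩ hb hφ hx (hc x hx) hε
      have := hle β hβ x (frontier_subset_closure hx)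
      linarith
  have hcont : ContinuousOn u (closure Ω) := by
    have key : ∀ ε > 0, ∃ δ > 0, ∀ x ∈ closure Ω, ∀ x' ∈ closure Ω, dist x' x < δ →
        u x' ≤ u x + 3 * ε := by
      intro ε hε
      obtain ⟨δ, hδ, h⟩ := walsh hF hΩ hb hφ hc hc' hε
      refine ⟨δ, hδ, fun x hx x' hx' hd => csSup_le (hne x') ?_⟩
      rintro _ ⟨v, hv, rfl⟩
      obtain ⟨β, hβ, h1⟩ := h v hv x hx x' hx' hd
      have := hle β hβ x hx
      linarith
    intro x hx
    refine Metric.continuousWithinAt_iff.2 fun ε hε => ?_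
    obtain ⟨δ, hδ, h⟩ := key (ε / 6) (by positivity)
    refine ⟨δ, hδ, fun {y} hy hd => ?_⟩
    have h1 := h x hx y hy hd
    have h2 := h y hy x hx (by rw [dist_comm]; exact hd)
    rw [Real.dist_eq, abs_lt]
    constructor <;> linarith
  have hV := visc_sup hF hΩ hle hap
  exact ⟨u, hcont, hbv, hV, visc_bump hF hΩ hle ⟨hcont, hV, fun b hb => (hbv b hb).le⟩⟩

/-- Theorem 6.2, the Dirichlet problem: existence and uniqueness of
the `F`-Dirichlet solution with given continuous boundary values on a bounded domain
whose boundary is strictly `F⃗`- and `F̃⃗`-convex. -/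
theorem dirichlet_problem {n : ℕ} (F : Set (SymMat n)) (hF : IsDirichletSet F)
    (Ω : Set (Euc n)) (hΩo : IsOpen Ω) (hΩb : Bornology.IsBounded Ω)
    (hsb : HasSmoothBoundary Ω)
    (hconvF : ∀ x ∈ frontier Ω, StrictlyConvexAt (raySet F) Ω x)
    (hconvFd : ∀ x ∈ frontier Ω, StrictlyConvexAt (raySet (dirDual F)) Ω x)
    (φ : Euc n → ℝ) (hφ : ContinuousOn φ (frontier Ω)) :
    ∃ u : Euc n → ℝ,
      (ContinuousOn u (closure Ω) ∧ (∀ x ∈ frontier Ω, u x = φ x) ∧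
        IsTypeF F Ω (fun x => (u x : EReal)) ∧
        IsTypeF (dirDual F) Ω (fun x => ((-u x : ℝ) : EReal))) ∧
      ∀ u' : Euc n → ℝ,
        (ContinuousOn u' (closure Ω) ∧ (∀ x ∈ frontier Ω, u' x = φ x) ∧
          IsTypeF F Ω (fun x => (u' x : EReal)) ∧
          IsTypeF (dirDual F) Ω (fun x => ((-u' x : ℝ) : EReal))) →
        ∀ x ∈ closure Ω, u' x = u x := by
  obtain ⟨u, h1, h2, h3, h4⟩ := perron hF hΩo hΩb hφ hconvF hconvFd
  have hFd := dirDual_dirichlet hF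
  refine ⟨u, ⟨h1, h2, type_of_visc hF hΩo (h1.mono subset_closure) h3,
    type_of_visc hFd hΩo (h1.mono subset_closure).neg h4⟩, ?_⟩
  rintro w ⟨k1, k2, k3, k4⟩ x hx
  have m3 := visc_of_type hF hΩo k3
  have m4 : Visc (dirDual F) Ω (fun x => - w x) := visc_of_type hFd hΩo k4
  have c1 : w x + - u x ≤ 0 := comparison hF hΩo hΩb k1 h1.neg m3 h4 (fun b hb => by
    show w b + - u b ≤ 0
    rw [k2 b hb, h2 b hb]; linarith) x hx
  have c2 : u x + - w x ≤ 0 := comparison hF hΩo hΩb h1 k1.neg h3 m4 (fun b hb => by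
    show u b + - w b ≤ 0
    rw [k2 b hb, h2 b hb]; linarith) x hx
  linarith
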